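/- arXiv:1912.06230 — 2 statements merged into one kernel-verified Lean document; each statement's English description precedes it below -/
import Mathlib

section
/- Let L be a G-graded field with graded subfields k ⊆ K ⊆ L and k ⊆ l ⊆ L, and suppose the restriction map ψ = ψ_{L/l,K/k} : P_{L/l} → P_{K/k}, O ↦ O ∩ K, is surjective. Let X ⊆ P_{K/k} be a finite union of affine subsets P_{K/k}{A_i} = {O ∈ P_{K/k} : A_i ⊆ O}, where each A_i is a finitely generated graded k-subalgebra of K. If the preimage ψ⁻¹(X) is an affine subset of P_{L/l}, i.e. ψ⁻¹(X) = P_{L/l}{B} = {O ∈ P_{L/l} : B ⊆ O} for some finitely generated graded l-subalgebra B of L, then X itself is affine: X = P_{K/k}{A} for some finitely generated graded k-subalgebra A of K. -/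
universe u v

/-- A `G`-graded commutative ring structure on `A`: graded pieces `deg g`,
multiplicativity of the grading, and an internal direct sum decomposition
recorded by the homogeneous-component function `comp`. -/
structure GradedStr (G : Type u) [CommGroup G] (A : Type v) [CommRing A] where
  deg : G → AddSubgroup A
  one_mem : (1 : A) ∈ deg 1
  mul_mem : ∀ {g h : G} {a b : A}, a ∈ deg g → b ∈ deg h → a * b ∈ deg (g * h)
  comp : A → G → A
  comp_mem : ∀ a g, comp a g ∈ deg g
  comp_add : ∀ a b g, comp (a + b) g = comp a g + comp b g
  comp_of_mem : ∀ {a : A} {g : G}, a ∈ deg g → comp a g = a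
  comp_of_mem_ne : ∀ {a : A} {g g' : G}, a ∈ deg g → g' ≠ g → comp a g' = 0
  finite_support : ∀ a : A, (Function.support (comp a)).Finite
  sum_comp : ∀ a : A, ∑ᶠ g, comp a g = a

namespace GradedStr

variable {G : Type u} [CommGroup G] {A : Type v} [CommRing A]

/-- `a` is homogeneous: it lies in some graded piece. -/
def IsHomog (𝒜 : GradedStr G A) (a : A) : Prop := ∃ g, a ∈ 𝒜.deg g

/-- A `G`-graded field: a nonzero graded ring in which every nonzero homogeneous
element is invertible. -/
def IsGradedField (𝒜 : GradedStr G A) : Prop :=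
  Nontrivial A ∧ ∀ a : A, 𝒜.IsHomog a → a ≠ 0 → IsUnit a

/-- A graded subring: a subring stable under taking homogeneous components. -/
def IsGradedSubring (𝒜 : GradedStr G A) (S : Subring A) : Prop :=
  ∀ x ∈ S, ∀ g, 𝒜.comp x g ∈ S

/-- A graded subfield of a graded field: a graded subring containing the inverses of
its nonzero homogeneous elements. -/
def IsGradedSubfield (𝒜 : GradedStr G A) (S : Subring A) : Prop :=
  𝒜.IsGradedSubring S ∧ ∀ x ∈ S, 𝒜.IsHomog x → x ≠ 0 → Ring.inverse x ∈ S

/-- The additive subgroup of homogeneous polynomials of grading `h` in `K[g₀⁻¹ T]`,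
the polynomial ring in which `T` is declared homogeneous of grading `g₀`: the
coefficient of `T^n` must be homogeneous of grading `h * g₀⁻ⁿ`. -/
def polyDeg (𝒜 : GradedStr G A) (g₀ h : G) : AddSubgroup (Polynomial A) where
  carrier := {p | ∀ n : ℕ, p.coeff n ∈ 𝒜.deg (h * (g₀ ^ n)⁻¹)}
  zero_mem' := by intro n; simpa using (𝒜.deg (h * (g₀ ^ n)⁻¹)).zero_mem
  add_mem' := by
    intro p q hp hq n
    rw [Polynomial.coeff_add]
    exact (𝒜.deg _).add_mem (hp n) (hq n)
  neg_mem' := by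
    intro p hp n
    rw [Polynomial.coeff_neg]
    exact (𝒜.deg _).neg_mem (hp n)

/-- A homogeneous polynomial in `K[g₀⁻¹T]`. -/
def IsHomogPoly (𝒜 : GradedStr G A) (g₀ : G) (p : Polynomial A) : Prop :=
  ∃ h, p ∈ 𝒜.polyDeg g₀ h

/-- The graded fraction field of a graded subring of a graded field, computed inside
the ambient graded field: the subring generated by `S` together with the inverses of
the nonzero homogeneous elements of `S`. -/
def fracIn (𝒜 : GradedStr G A) (S : Subring A) : Subring A :=
  Subring.closure (↑S ∪ {y : A | ∃ x ∈ S, x ≠ 0 ∧ 𝒜.IsHomog x ∧ y = Ring.inverse x})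

end GradedStr

/-- `x` is integral over the subring `S` (satisfies a monic polynomial equation with
coefficients in `S`). -/
def IntegralOver {A : Type v} [CommRing A] (S : Subring A) (x : A) : Prop :=
  ∃ p : Polynomial A, p.Monic ∧ (∀ n, p.coeff n ∈ S) ∧ Polynomial.eval x p = 0

/-- Algebraic independence of a family of elements over a subring: the evaluation map
from the (multivariate) polynomial ring is injective.  (For homogeneous elements this
is graded algebraic independence, the grading playing no role in injectivity.) -/
def AlgIndepOver {A : Type v} [CommRing A] {ι : Type*} (S : Subring A) (T : ι → A) : Prop :=
  Function.Injective (MvPolynomial.eval₂Hom S.subtype T)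

/-- A graded valuation ring of the graded subfield `F` of the ambient graded field:
a graded subring `O ⊆ F` such that every nonzero homogeneous element `f` of `F`
satisfies `f ∈ O` or `f⁻¹ ∈ O`. -/
def IsGVRofSubfield {G : Type u} [CommGroup G] {A : Type v} [CommRing A]
    (𝒜 : GradedStr G A) (F : Subring A) (O : Subring A) : Prop :=
  O ≤ F ∧ 𝒜.IsGradedSubring O ∧
    ∀ f ∈ F, f ≠ 0 → 𝒜.IsHomog f → f ∈ O ∨ Ring.inverse f ∈ O

open Polynomial

namespace GradedStr

section Basics

variable {G : Type u} [CommGroup G] {L : Type v} [CommRing L] (𝒜 : GradedStr G L)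

lemma comp_zero' (g : G) : 𝒜.comp 0 g = 0 := 𝒜.comp_of_mem (𝒜.deg g).zero_mem

/-- the component map as an additive homomorphism -/
def compHom (g : G) : L →+ L where
  toFun x := 𝒜.comp x g
  map_zero' := 𝒜.comp_zero' g
  map_add' x y := 𝒜.comp_add x y g

lemma compHom_apply (g : G) (x : L) : 𝒜.compHom g x = 𝒜.comp x g := rfl

lemma comp_neg' (x : L) (g : G) : 𝒜.comp (-x) g = - 𝒜.comp x g := map_neg (𝒜.compHom g) x

lemma comp_sum' {ι : Type*} (s : Finset ι) (f : ι → L) (g : G) :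
    𝒜.comp (∑ i ∈ s, f i) g = ∑ i ∈ s, 𝒜.comp (f i) g := map_sum (𝒜.compHom g) f s

lemma sum_comp' (x : L) : ∑ g ∈ (𝒜.finite_support x).toFinset, 𝒜.comp x g = x := by
  conv_rhs => rw [← 𝒜.sum_comp x]
  rw [finsum_eq_sum _ (𝒜.finite_support x)]

lemma comp_mul_left {x : L} {g : G} (hx : x ∈ 𝒜.deg g) (y : L) (h : G) :
    𝒜.comp (x * y) (g * h) = x * 𝒜.comp y h := by
  classical
  conv_lhs => rw [← 𝒜.sum_comp' y]
  rw [Finset.mul_sum, comp_sum']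
  rw [Finset.sum_eq_single h]
  · exact 𝒜.comp_of_mem (𝒜.mul_mem hx (𝒜.comp_mem y h))
  · intro b _ hb
    apply 𝒜.comp_of_mem_ne (𝒜.mul_mem hx (𝒜.comp_mem y b))
    intro he
    exact hb (mul_left_cancel he).symm
  · intro hh
    have : 𝒜.comp y h = 0 := by
      by_contra hne
      exact hh (by simpa using hne)
    rw [this, mul_zero, comp_zero']

lemma comp_mul_left' {x : L} {g : G} (hx : x ∈ 𝒜.deg g) (y : L) (h : G) :
    𝒜.comp (x * y) h = x * 𝒜.comp y (g⁻¹ * h) := by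
  rw [← 𝒜.comp_mul_left hx]; simp

lemma eq_zero_of_comp {x : L} (h : ∀ g, 𝒜.comp x g = 0) : x = 0 := by
  rw [← 𝒜.sum_comp' x]
  exact Finset.sum_eq_zero fun g _ => h g

lemma exists_comp_ne {x : L} (h : x ≠ 0) : ∃ g, 𝒜.comp x g ≠ 0 := by
  by_contra hc
  push Not at hc
  exact h (𝒜.eq_zero_of_comp hc)

lemma pow_mem' {x : L} {g : G} (hx : x ∈ 𝒜.deg g) (n : ℕ) : x ^ n ∈ 𝒜.deg (g ^ n) := by
  induction n with
  | zero => simpa using 𝒜.one_mem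
  | succ n ih => rw [pow_succ, pow_succ]; exact 𝒜.mul_mem ih hx

lemma isHomog_comp (x : L) (g : G) : 𝒜.IsHomog (𝒜.comp x g) := ⟨g, 𝒜.comp_mem x g⟩

lemma isHomog_mul {x y : L} (hx : 𝒜.IsHomog x) (hy : 𝒜.IsHomog y) : 𝒜.IsHomog (x * y) := by
  obtain ⟨g, hg⟩ := hx
  obtain ⟨h, hh⟩ := hy
  exact ⟨_, 𝒜.mul_mem hg hh⟩

lemma isHomog_pow {x : L} (hx : 𝒜.IsHomog x) (n : ℕ) : 𝒜.IsHomog (x ^ n) := by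
  obtain ⟨g, hg⟩ := hx
  exact ⟨_, 𝒜.pow_mem' hg n⟩

lemma isHomog_one : 𝒜.IsHomog 1 := ⟨1, 𝒜.one_mem⟩

lemma inv_mem' {x : L} {g : G} (hx : x ∈ 𝒜.deg g) (hu : IsUnit x) :
    Ring.inverse x ∈ 𝒜.deg g⁻¹ := by
  have h1 : x * Ring.inverse x = 1 := Ring.mul_inverse_cancel x hu
  have h2 := 𝒜.comp_mul_left hx (Ring.inverse x) g⁻¹
  rw [h1, mul_inv_cancel, 𝒜.comp_of_mem 𝒜.one_mem] at h2
  have : 𝒜.comp (Ring.inverse x) g⁻¹ = Ring.inverse x := by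
    apply hu.mul_left_cancel
    rw [← h2, h1]
  rw [← this]
  exact 𝒜.comp_mem _ _

/-- homogeneous elements of two graded pieces: comp of a homogeneous element is itself or zero -/
lemma comp_homog {x : L} (hx : 𝒜.IsHomog x) (g : G) : 𝒜.comp x g = x ∨ 𝒜.comp x g = 0 := by
  obtain ⟨h, hh⟩ := hx
  by_cases e : g = h
  · left; rw [e]; exact 𝒜.comp_of_mem hh
  · right; exact 𝒜.comp_of_mem_ne hh e

variable {𝒜}

lemma IsGradedField.inv_mul (hL : 𝒜.IsGradedField) {x : L} (hx : 𝒜.IsHomog x) (h0 : x ≠ 0) :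
    Ring.inverse x * x = 1 := Ring.inverse_mul_cancel x (hL.2 x hx h0)

lemma IsGradedField.mul_inv (hL : 𝒜.IsGradedField) {x : L} (hx : 𝒜.IsHomog x) (h0 : x ≠ 0) :
    x * Ring.inverse x = 1 := Ring.mul_inverse_cancel x (hL.2 x hx h0)

lemma IsGradedField.inv_homog (hL : 𝒜.IsGradedField) {x : L} (hx : 𝒜.IsHomog x) :
    𝒜.IsHomog (Ring.inverse x) := by
  by_cases h0 : x = 0
  · rw [h0, Ring.inverse_zero]; exact ⟨1, (𝒜.deg 1).zero_mem⟩
  · obtain ⟨g, hg⟩ := hx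
    exact ⟨_, 𝒜.inv_mem' hg (hL.2 x ⟨g, hg⟩ h0)⟩

lemma IsGradedField.one_ne (hL : 𝒜.IsGradedField) : (1 : L) ≠ 0 := by
  have := hL.1
  exact one_ne_zero

lemma IsGradedField.mul_ne (hL : 𝒜.IsGradedField) {x y : L} (hx : 𝒜.IsHomog x) (h0 : x ≠ 0)
    (hy : y ≠ 0) : x * y ≠ 0 := by
  intro h
  apply hy
  exact (hL.2 x hx h0).mul_left_cancel (by rw [h, mul_zero])

lemma IsGradedField.inv_ne (hL : 𝒜.IsGradedField) {x : L} (hx : 𝒜.IsHomog x) (h0 : x ≠ 0) :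
    Ring.inverse x ≠ 0 := by
  intro h
  have := hL.mul_inv hx h0
  rw [h, mul_zero] at this
  exact hL.one_ne this.symm

lemma IsGradedField.inv_inv (hL : 𝒜.IsGradedField) {x : L} (hx : 𝒜.IsHomog x) (h0 : x ≠ 0) :
    Ring.inverse (Ring.inverse x) = x := by
  apply (hL.2 _ (hL.inv_homog hx) (hL.inv_ne hx h0)).mul_left_cancel
  rw [hL.mul_inv (hL.inv_homog hx) (hL.inv_ne hx h0), hL.inv_mul hx h0]

lemma IsGradedField.pow_ne (hL : 𝒜.IsGradedField) {x : L} (hx : 𝒜.IsHomog x) (h0 : x ≠ 0)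
    (n : ℕ) : x ^ n ≠ 0 := by
  induction n with
  | zero => simpa using hL.one_ne
  | succ n ih => rw [pow_succ']; exact hL.mul_ne hx h0 ih

lemma isGradedSubfield_top (𝒜 : GradedStr G L) : 𝒜.IsGradedSubfield ⊤ :=
  ⟨fun _ _ _ => trivial, fun _ _ _ _ => trivial⟩

/-- A graded subring is contained in another subring as soon as its homogeneous elements are. -/
lemma IsGradedSubring.le_of_homog {S T : Subring L} (hS : 𝒜.IsGradedSubring S)
    (h : ∀ x ∈ S, 𝒜.IsHomog x → x ∈ T) : S ≤ T := by
  intro x hx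
  rw [← 𝒜.sum_comp' x]
  exact sum_mem fun g _ => h _ (hS x hx g) (𝒜.isHomog_comp x g)

lemma graded_closure {T : Set L} (hT : ∀ x ∈ T, ∀ g, 𝒜.comp x g ∈ Subring.closure T) :
    𝒜.IsGradedSubring (Subring.closure T) := by
  intro x hx
  induction hx using Subring.closure_induction with
  | mem x hx => exact hT x hx
  | zero => intro g; rw [comp_zero']; exact zero_mem _
  | one =>
    intro g
    rcases 𝒜.comp_homog 𝒜.isHomog_one g with h | h
    · rw [h]; exact OneMemClass.one_mem _
    · rw [h]; exact zero_mem _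
  | add x y _ _ hx hy => intro g; rw [𝒜.comp_add]; exact add_mem (hx g) (hy g)
  | neg x _ hx => intro g; rw [comp_neg']; exact neg_mem (hx g)
  | mul x y _ _ hx hy =>
    intro g
    have hxy : x * y = ∑ h ∈ (𝒜.finite_support x).toFinset, 𝒜.comp x h * y := by
      rw [← Finset.sum_mul, 𝒜.sum_comp']
    rw [hxy, comp_sum']
    refine sum_mem fun h _ => ?_
    rw [𝒜.comp_mul_left' (𝒜.comp_mem x h)]
    exact MulMemClass.mul_mem (hx _) (hy _)

lemma graded_closure_union {S : Subring L} (hS : 𝒜.IsGradedSubring S) {T : Set L}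
    (hT : ∀ x ∈ T, 𝒜.IsHomog x) : 𝒜.IsGradedSubring (Subring.closure (↑S ∪ T)) := by
  apply graded_closure
  rintro x (hx | hx) g
  · exact Subring.subset_closure (Or.inl (hS x hx g))
  · rcases 𝒜.comp_homog (hT x hx) g with h | h
    · rw [h]; exact Subring.subset_closure (Or.inr hx)
    · rw [h]; exact zero_mem _

lemma graded_sup {S T : Subring L} (hS : 𝒜.IsGradedSubring S) (hT : 𝒜.IsGradedSubring T) :
    𝒜.IsGradedSubring (S ⊔ T) := by
  have : S ⊔ T = Subring.closure (↑S ∪ ↑T) := by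
    rw [Subring.closure_union, Subring.closure_eq, Subring.closure_eq]
  rw [this]
  apply graded_closure
  rintro x (hx | hx) g
  · exact Subring.subset_closure (Or.inl (hS x hx g))
  · exact Subring.subset_closure (Or.inr (hT x hx g))

/-- `S[t]` as a subring -/
noncomputable def adj (S : Subring L) (t : L) : Subring L := (aeval t : S[X] →ₐ[S] L).toRingHom.range

lemma mem_adj {S : Subring L} {t x : L} : x ∈ adj S t ↔ ∃ p : S[X], aeval t p = x := Iff.rfl

lemma le_adj (S : Subring L) (t : L) : S ≤ adj S t := fun x hx => ⟨C ⟨x, hx⟩, by simp; rfl⟩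

lemma self_mem_adj (S : Subring L) (t : L) : t ∈ adj S t := ⟨X, by simp⟩

lemma aeval_mem {S T : Subring L} (h : S ≤ T) {t : L} (ht : t ∈ T) (p : S[X]) :
    aeval t p ∈ T := by
  rw [aeval_eq_sum_range]
  refine sum_mem fun i _ => ?_
  rw [Algebra.smul_def]
  exact MulMemClass.mul_mem (h (p.coeff i).2) (pow_mem ht i)

lemma adj_le {S T : Subring L} (h : S ≤ T) {t : L} (ht : t ∈ T) : adj S t ≤ T := by
  rintro x ⟨p, rfl⟩
  exact aeval_mem h ht p

/-- homogeneous component of a polynomial -/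
noncomputable def pc {F : Subring L} (hF : 𝒜.IsGradedSubring F) (g h : G) (p : F[X]) : F[X] :=
  ∑ n ∈ p.support, monomial n ⟨𝒜.comp (p.coeff n) (h * (g ^ n)⁻¹), hF _ (p.coeff n).2 _⟩

lemma pc_coeff {F : Subring L} (hF : 𝒜.IsGradedSubring F) (g h : G) (p : F[X]) (n : ℕ) :
    ((pc hF g h p).coeff n : L) = 𝒜.comp (p.coeff n) (h * (g ^ n)⁻¹) := by
  classical
  rw [pc, finsetSum_coeff]
  simp only [coeff_monomial]
  rw [Finset.sum_ite_eq']
  split_ifs with hn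
  · rfl
  · rw [notMem_support_iff.mp hn]
    simp [comp_zero']

lemma pc_aeval {F : Subring L} (hF : 𝒜.IsGradedSubring F) {g : G} (h : G) (p : F[X]) {z : L}
    (hz : z ∈ 𝒜.deg g) : aeval z (pc hF g h p) = 𝒜.comp (aeval z p) h := by
  rw [aeval_eq_sum_range' (n := max p.natDegree (pc hF g h p).natDegree + 1) (by omega) z,
    aeval_eq_sum_range' (n := max p.natDegree (pc hF g h p).natDegree + 1) (by omega) z, comp_sum']
  refine Finset.sum_congr rfl fun n _ => ?_
  rw [Algebra.smul_def, Algebra.smul_def]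
  change ((pc hF g h p).coeff n : L) * z ^ n = 𝒜.comp ((p.coeff n : L) * z ^ n) h
  rw [pc_coeff, mul_comm, mul_comm (p.coeff n : L), 𝒜.comp_mul_left' (𝒜.pow_mem' hz n),
    mul_comm h]

/-- homogeneous polynomial over a subring -/
def HP (𝒜 : GradedStr G L) {F : Subring L} (g : G) (p : F[X]) : Prop :=
  ∃ h, ∀ n, (p.coeff n : L) ∈ 𝒜.deg (h * (g ^ n)⁻¹)

lemma pc_HP {F : Subring L} (hF : 𝒜.IsGradedSubring F) (g h : G) (p : F[X]) :
    𝒜.HP g (pc hF g h p) := ⟨h, fun n => by rw [pc_coeff]; exact 𝒜.comp_mem _ _⟩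

lemma HP.coeff {F : Subring L} {g : G} {p : F[X]} (hp : 𝒜.HP g p) (n : ℕ) :
    𝒜.IsHomog (p.coeff n : L) := by
  obtain ⟨h, hh⟩ := hp
  exact ⟨_, hh n⟩

lemma HP.aeval {F : Subring L} {g : G} {p : F[X]} (hp : 𝒜.HP g p) {z : L} (hz : z ∈ 𝒜.deg g) :
    𝒜.IsHomog (aeval z p) := by
  obtain ⟨h, hh⟩ := hp
  refine ⟨h, ?_⟩
  rw [aeval_eq_sum_range]
  refine sum_mem fun n _ => ?_
  have := 𝒜.mul_mem (hh n) (𝒜.pow_mem' hz n)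
  rwa [inv_mul_cancel_right] at this

lemma exists_pc_ne {F : Subring L} (hF : 𝒜.IsGradedSubring F) (g : G) {p : F[X]} (hp : p ≠ 0) :
    ∃ h, pc hF g h p ≠ 0 := by
  obtain ⟨n, hn⟩ : ∃ n, p.coeff n ≠ 0 := by
    by_contra hc
    push Not at hc
    exact hp (Polynomial.ext (by simpa using hc))
  obtain ⟨i, hi⟩ := 𝒜.exists_comp_ne (x := (p.coeff n : L)) (by simpa using hn)
  refine ⟨i * g ^ n, fun h0 => hi ?_⟩
  have := pc_coeff hF g (i * g ^ n) p n
  rw [h0, mul_inv_cancel_right] at this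
  simpa using this.symm

lemma adj_graded {S : Subring L} (hS : 𝒜.IsGradedSubring S) {t : L} (ht : 𝒜.IsHomog t) :
    𝒜.IsGradedSubring (adj S t) := by
  obtain ⟨g, hg⟩ := ht
  rintro x ⟨p, rfl⟩ h
  exact ⟨pc hS g h p, pc_aeval hS h p hg⟩

/-- a homogeneous element of `S[t]` is the value of a homogeneous polynomial -/
lemma adj_homog {S : Subring L} (hS : 𝒜.IsGradedSubring S) {t : L} {g : G} (hg : t ∈ 𝒜.deg g)
    {x : L} (hx : 𝒜.IsHomog x) (hxS : x ∈ adj S t) : ∃ p : S[X], 𝒜.HP g p ∧ aeval t p = x := by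
  obtain ⟨p, rfl⟩ := hxS
  obtain ⟨h, hh⟩ := hx
  exact ⟨pc hS g h p, pc_HP _ _ _ _, by rw [pc_aeval hS h p hg]; exact 𝒜.comp_of_mem hh⟩

/-- a polynomial over a graded subfield with nonzero homogeneous leading coefficient can be
made monic -/
lemma exists_monic (hL : 𝒜.IsGradedField) {F : Subring L} (hF : 𝒜.IsGradedSubfield F)
    {p : F[X]} (h0 : p ≠ 0) (hh : 𝒜.IsHomog (p.leadingCoeff : L)) :
    ∃ u : F, 𝒜.IsHomog (u : L) ∧ (C u * p).Monic := by
  have hne : (p.leadingCoeff : L) ≠ 0 := by simpa using h0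
  refine ⟨⟨_, hF.2 _ p.leadingCoeff.2 hh hne⟩, hL.inv_homog hh, ?_⟩
  apply monic_C_mul_of_mul_leadingCoeff_eq_one
  ext
  exact hL.inv_mul hh hne

lemma HP.C_mul {F : Subring L} {g : G} {p : F[X]} (hp : 𝒜.HP g p) {u : F}
    (hu : 𝒜.IsHomog (u : L)) : 𝒜.HP g (C u * p) := by
  obtain ⟨h, hh⟩ := hp
  obtain ⟨i, hi⟩ := hu
  refine ⟨i * h, fun n => ?_⟩
  rw [coeff_C_mul, mul_assoc]
  exact 𝒜.mul_mem hi (hh n)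

/-- homogeneous ideals of `F[X]` are principal, `F` a graded subfield -/
lemma principal (hL : 𝒜.IsGradedField) {F : Subring L} (hF : 𝒜.IsGradedSubfield F) (g : G)
    (I : Ideal F[X]) (hI : ∀ p ∈ I, ∀ h, pc hF.1 g h p ∈ I) (hne : ∃ p ∈ I, p ≠ 0) :
    ∃ q ∈ I, q.Monic ∧ 𝒜.HP g q ∧ ∀ p ∈ I, q ∣ p := by
  classical
  have hex : ∃ d : ℕ, ∃ q ∈ I, q ≠ 0 ∧ 𝒜.HP g q ∧ q.natDegree = d := by
    obtain ⟨p, hp, h0⟩ := hne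
    obtain ⟨h, hh⟩ := exists_pc_ne hF.1 g h0
    exact ⟨_, _, hI p hp h, hh, pc_HP _ _ _ _, rfl⟩
  obtain ⟨q, hqI, hq0, hqH, hqd⟩ := Nat.find_spec hex
  obtain ⟨u, hu, hmon⟩ := exists_monic hL hF hq0 (hqH.coeff _)
  have : Nontrivial F := ⟨⟨0, 1, fun h => hL.one_ne (congrArg Subtype.val h).symm⟩⟩
  refine ⟨C u * q, I.mul_mem_left _ hqI, hmon, hqH.C_mul hu, fun p hp => ?_⟩
  rw [← modByMonic_eq_zero_iff_dvd hmon]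
  by_contra hr
  have hrI : p %ₘ (C u * q) ∈ I := by
    rw [modByMonic_eq_sub_mul_div]
    exact I.sub_mem hp (I.mul_mem_right _ (I.mul_mem_left _ hqI))
  obtain ⟨h, hh⟩ := exists_pc_ne hF.1 g hr
  have hle : (C u * q).natDegree ≤ (pc hF.1 g h (p %ₘ (C u * q))).natDegree := by
    refine (natDegree_C_mul_le _ _).trans ?_
    rw [hqd]
    exact Nat.find_min' hex ⟨_, hI _ hrI h, hh, pc_HP _ _ _ _, rfl⟩
  have hlt : (pc hF.1 g h (p %ₘ (C u * q))).degree < (C u * q).degree := by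
    refine lt_of_le_of_lt ?_ (degree_modByMonic_lt p hmon)
    rw [degree_le_iff_coeff_zero]
    intro m hm
    ext
    rw [pc_coeff, coeff_eq_zero_of_degree_lt hm]
    simp [comp_zero']
  exact absurd (natDegree_lt_natDegree hh hlt) (by omega)

end Basics

end GradedStr


namespace GradedStr

section Domination

lemma isIntegral_of_inv {R A : Type*} [CommRing R] [CommRing A] [Algebra R A] {b f : A}
    (hbf : b * f = 1) (p : R[X]) (hp : aeval f p = b) : IsIntegral R b := by
  set n := p.natDegree with hn
  refine ⟨X ^ (n + 1) - ∑ i ∈ Finset.range (n + 1), C (p.coeff i) * X ^ (n - i), ?_, ?_⟩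
  · apply monic_X_pow_sub
    refine lt_of_le_of_lt (b := (n : WithBot ℕ)) ?_ (by exact_mod_cast Nat.lt_succ_self n)
    refine (Polynomial.degree_sum_le (Finset.range (n + 1))
      (fun i => C (p.coeff i) * X ^ (n - i))).trans (Finset.sup_le fun i _ => ?_)
    refine (degree_C_mul_X_pow_le _ _).trans ?_
    exact_mod_cast Nat.sub_le n i
  · rw [← aeval_def, map_sub, map_sum, sub_eq_zero, map_pow, aeval_X, pow_succ]
    have hb : b = ∑ i ∈ Finset.range (n + 1), p.coeff i • f ^ i := by
      rw [hn, ← aeval_eq_sum_range, hp]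
    refine (congrArg (b ^ n * ·) hb).trans ?_
    change b ^ n * ∑ i ∈ Finset.range (n + 1), p.coeff i • f ^ i = _
    rw [Finset.mul_sum]
    refine Finset.sum_congr rfl fun i hi => ?_
    have hin : i ≤ n := by simpa [Nat.lt_succ_iff] using hi
    rw [map_mul, aeval_C, map_pow, aeval_X, Algebra.smul_def]
    have : b ^ n * f ^ i = b ^ (n - i) := by
      rw [← Nat.sub_add_cancel hin, pow_add, mul_assoc, ← mul_pow, hbf]; simp
    rw [← this]; ring

variable {G : Type u} [CommGroup G] {L : Type v} [CommRing L] {𝒜 : GradedStr G L}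

lemma mem_of_integral_inv {O : Subring L} {x f : L} (hxf : x * f = 1) (hf : f ∈ O)
    (hx : IsIntegral O x) : x ∈ O := by
  obtain ⟨p, hp, hpx⟩ := hx
  have hp : p.Monic := hp
  rw [← aeval_def] at hpx
  rcases Nat.eq_zero_or_pos p.natDegree with h0 | hpos
  · have h0 := hp.natDegree_eq_zero.mp h0
    rw [h0] at hpx
    simp only [map_one] at hpx
    have : x = 0 := by rw [← mul_one x, hpx, mul_zero]
    rw [this]; exact zero_mem _
  · obtain ⟨n, hn⟩ : ∃ n, p.natDegree = n + 1 := ⟨p.natDegree - 1, by omega⟩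
    rw [aeval_eq_sum_range, Finset.sum_range_succ, hp.coeff_natDegree, one_smul, hn] at hpx
    have key : ∀ i ≤ n, x ^ i * f ^ n = f ^ (n - i) := by
      intro i hi
      nth_rewrite 1 [← Nat.sub_add_cancel hi]
      rw [pow_add, mul_comm (f ^ (n - i)), ← mul_assoc, ← mul_pow, hxf]; simp
    have hx' : x = - ∑ i ∈ Finset.range (n + 1), p.coeff i • f ^ (n - i) := by
      have h2 : x ^ (n + 1) = - ∑ i ∈ Finset.range (n + 1), p.coeff i • x ^ i :=
        eq_neg_of_add_eq_zero_right hpx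
      calc x = x ^ (n + 1) * f ^ n := by
              rw [pow_succ', mul_assoc, key n le_rfl]; simp
        _ = _ := by
              rw [h2, neg_mul, Finset.sum_mul]
              congr 1
              refine Finset.sum_congr rfl fun i hi => ?_
              rw [smul_mul_assoc, key i (by simpa [Nat.lt_succ_iff] using hi)]
    rw [hx']
    refine neg_mem (sum_mem fun i _ => ?_)
    rw [Algebra.smul_def]
    exact MulMemClass.mul_mem (p.coeff i).2 (pow_mem hf _)

lemma nakayama_inv {O : Subring L} {f e : L} (hfe : f * e = 1) (J : Ideal O) (p q : O[X])
    (hp : ∀ i, p.coeff i ∈ J) (hq : ∀ i, q.coeff i ∈ J) (h1 : aeval f p = 1)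
    (h2 : aeval e q = 1) : (1 : O) ∈ J := by
  set n := p.natDegree
  set m := q.natDegree
  let E : ℕ → L := fun i => f ^ i * e ^ m
  let N : Submodule O L := Submodule.span O (E '' Finset.range (n + m + 1))
  have hE : ∀ i < n + m + 1, E i ∈ N := fun i hi =>
    Submodule.subset_span ⟨i, by simpa using hi, rfl⟩
  have hfg : N.FG := Submodule.fg_span ((Finset.finite_toSet _).image _)
  have hle : N ≤ J • N := by
    refine Submodule.span_le.mpr ?_
    rintro _ ⟨i, hi, rfl⟩
    have hi' : i < n + m + 1 := by simpa using hi
    by_cases him : m ≤ i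
    · have : E i = ∑ r ∈ Finset.range (m + 1), q.coeff r • E (i - r) := by
        calc E i = E i * aeval e q := by rw [h2, mul_one]
          _ = _ := by
            rw [aeval_eq_sum_range, Finset.mul_sum]
            refine Finset.sum_congr rfl fun r hr => ?_
            have hr' : r ≤ i := by
              have : r < m + 1 := by simpa using hr
              omega
            rw [mul_smul_comm]
            congr 1
            change f ^ i * e ^ m * e ^ r = f ^ (i - r) * e ^ m
            nth_rewrite 1 [← Nat.sub_add_cancel hr']
            rw [pow_add]
            calc _ = f ^ (i - r) * e ^ m * (f * e) ^ r := by rw [mul_pow]; ring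
              _ = _ := by rw [hfe]; simp
      rw [this]
      exact sum_mem fun r hr => Submodule.smul_mem_smul (hq r) (hE _ (by omega))
    · have : E i = ∑ r ∈ Finset.range (n + 1), p.coeff r • E (i + r) := by
        calc E i = E i * aeval f p := by rw [h1, mul_one]
          _ = _ := by
            rw [aeval_eq_sum_range, Finset.mul_sum]
            refine Finset.sum_congr rfl fun r hr => ?_
            rw [mul_smul_comm]
            congr 1
            change f ^ i * e ^ m * f ^ r = f ^ (i + r) * e ^ m
            ring
      rw [this]
      refine sum_mem fun r hr => Submodule.smul_mem_smul (hp r) (hE _ ?_)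
      have : r < n + 1 := by simpa using hr
      omega
  obtain ⟨r, hr, hr0⟩ :=
    Submodule.exists_sub_one_mem_and_smul_eq_zero_of_fg_of_le_smul J N hfg hle
  have h1N : (1 : L) ∈ N := by
    have := hE m (by omega)
    simpa [E, ← mul_pow, hfe] using this
  have h3 := hr0 1 h1N
  have hr00 : r = 0 := by
    rw [Algebra.smul_def, mul_one] at h3
    exact Subtype.ext h3
  rw [hr00, zero_sub] at hr
  simpa using J.neg_mem hr

lemma span_mono_ring {S T : Subring L} (h : S ≤ T) {s : Set L} {x : L}
    (hx : x ∈ Submodule.span S s) : x ∈ Submodule.span T s := by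
  induction hx using Submodule.span_induction with
  | mem x hx => exact Submodule.subset_span hx
  | zero => exact zero_mem _
  | add x y _ _ hx hy => exact add_mem hx hy
  | smul a x _ hx => exact Submodule.smul_mem _ (⟨a.1, h a.2⟩ : T) hx

lemma span_sSup {c : Set (Subring L)} (hc : DirectedOn (· ≤ ·) c) (hne : c.Nonempty) {s : Set L}
    {x : L} (hx : x ∈ Submodule.span (sSup c : Subring L) s) :
    ∃ S ∈ c, x ∈ Submodule.span S s := by
  induction hx using Submodule.span_induction with
  | mem x hx => obtain ⟨S, hS⟩ := hne; exact ⟨S, hS, Submodule.subset_span hx⟩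
  | zero => obtain ⟨S, hS⟩ := hne; exact ⟨S, hS, zero_mem _⟩
  | add x y _ _ hx hy =>
    obtain ⟨S, hS, hxS⟩ := hx
    obtain ⟨T, hT, hyT⟩ := hy
    obtain ⟨U, hU, hSU, hTU⟩ := hc S hS T hT
    exact ⟨U, hU, add_mem (span_mono_ring hSU hxS) (span_mono_ring hTU hyT)⟩
  | smul a x _ hx =>
    obtain ⟨S, hS, hxS⟩ := hx
    obtain ⟨T, hT, haT⟩ := (Subring.mem_sSup_of_directedOn hne hc).mp a.2
    obtain ⟨U, hU, hSU, hTU⟩ := hc S hS T hT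
    exact ⟨U, hU, Submodule.smul_mem _ (⟨a.1, hTU haT⟩ : U) (span_mono_ring hSU hxS)⟩

lemma span_adj {O : Subring L} {f : L} {s : Set L} (hs : s ⊆ O) {x : L}
    (hx : x ∈ Submodule.span (adj O f) s) :
    ∃ p : O[X], (∀ i, p.coeff i ∈ Ideal.span {y : O | (y : L) ∈ s}) ∧ aeval f p = x := by
  set J := Ideal.span {y : O | (y : L) ∈ s}
  suffices h : ∃ p ∈ Ideal.map C J, aeval f p = x by
    obtain ⟨p, hp, h⟩ := h
    exact ⟨p, Ideal.mem_map_C_iff.mp hp, h⟩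
  induction hx using Submodule.span_induction with
  | mem x hx =>
    refine ⟨C ⟨x, hs hx⟩, Ideal.mem_map_of_mem _ (Ideal.subset_span hx), ?_⟩
    rw [aeval_C]; rfl
  | zero => exact ⟨0, zero_mem _, by simp⟩
  | add x y _ _ hx hy =>
    obtain ⟨p, hp, rfl⟩ := hx
    obtain ⟨q, hq, rfl⟩ := hy
    exact ⟨p + q, add_mem hp hq, by simp⟩
  | smul a x _ hx =>
    obtain ⟨p, hp, rfl⟩ := hx
    obtain ⟨r, hr⟩ := a.2
    refine ⟨r * p, Ideal.mul_mem_left _ _ hp, ?_⟩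
    rw [map_mul, Algebra.smul_def]
    congr 1

lemma span_of_ideal {O : Subring L} {s : Set L} {x : O}
    (hx : x ∈ Ideal.span {y : O | (y : L) ∈ s}) : (x : L) ∈ Submodule.span O s := by
  induction hx using Submodule.span_induction with
  | mem x hx => exact Submodule.subset_span hx
  | zero => exact zero_mem _
  | add x y _ _ hx hy => exact add_mem hx hy
  | smul a x _ hx => exact Submodule.smul_mem _ a hx

theorem dominate (hL : 𝒜.IsGradedField) {F D : Subring L} (hF : 𝒜.IsGradedSubfield F)
    (hD : 𝒜.IsGradedSubring D) (hDF : D ≤ F) {s : Set L} (hsD : s ⊆ D)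
    (hs : ∀ x ∈ s, 𝒜.IsHomog x) (h1 : (1 : L) ∉ Submodule.span D s) :
    ∃ O : Subring L, IsGVRofSubfield 𝒜 F O ∧ D ≤ O ∧
      ∀ x ∈ s, x ≠ 0 → Ring.inverse x ∉ O := by
  let Z : Set (Subring L) :=
    {S | D ≤ S ∧ S ≤ F ∧ 𝒜.IsGradedSubring S ∧ (1 : L) ∉ Submodule.span S s}
  obtain ⟨O, hDO, hmax⟩ := zorn_le_nonempty₀ Z (by
    intro c hcZ hc S hS
    have hdir : DirectedOn (· ≤ ·) c := hc.directedOn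
    have hne : c.Nonempty := ⟨S, hS⟩
    refine ⟨sSup c, ⟨(hcZ hS).1.trans (le_sSup hS), sSup_le fun T hT => (hcZ hT).2.1, ?_, ?_⟩,
      fun T hT => le_sSup hT⟩
    · intro x hx g
      rw [Subring.mem_sSup_of_directedOn hne hdir] at hx ⊢
      obtain ⟨T, hT, hxT⟩ := hx
      exact ⟨T, hT, (hcZ hT).2.2.1 x hxT g⟩
    · intro h
      obtain ⟨T, hT, hxT⟩ := span_sSup hdir hne h
      exact (hcZ hT).2.2.2 hxT) D ⟨le_rfl, hDF, hD, h1⟩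
  obtain ⟨-, hOF, hOg, hO1⟩ := hmax.prop
  refine ⟨O, ⟨hOF, hOg, ?_⟩, hDO, ?_⟩
  · intro f hfF hf0 hfh
    by_contra hcon
    push Not at hcon
    have key : ∀ a ∈ F, 𝒜.IsHomog a → a ∉ O → (1 : L) ∈ Submodule.span (adj O a) s := by
      intro a haF hah haO
      by_contra hc
      have : adj O a ∈ Z := ⟨hDO.trans (le_adj O a), adj_le hOF haF, adj_graded hOg hah, hc⟩
      exact haO (hmax.le_of_ge this (le_adj O a) (self_mem_adj O a))
    have hsO : s ⊆ O := fun x hx => hDO (hsD hx)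
    obtain ⟨p, hp, hp1⟩ := span_adj hsO (key f hfF hfh hcon.1)
    obtain ⟨q, hq, hq1⟩ := span_adj hsO
      (key _ (hF.2 f hfF hfh hf0) (hL.inv_homog hfh) hcon.2)
    exact hO1 (span_of_ideal (nakayama_inv (hL.mul_inv hfh hf0) _ p q hp hq hp1 hq1))
  · intro x hx h0 hi
    apply hO1
    have := Submodule.smul_mem (Submodule.span O s) (⟨_, hi⟩ : O) (Submodule.subset_span hx)
    rw [Algebra.smul_def] at this
    change Ring.inverse x * x ∈ _ at this
    rwa [hL.inv_mul (hs x hx) h0] at this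

/-- valuative criterion of integrality -/
theorem integral_of_forall (hL : 𝒜.IsGradedField) {D : Subring L} (hD : 𝒜.IsGradedSubring D)
    {b : L} (hb : 𝒜.IsHomog b)
    (h : ∀ O : Subring L, IsGVRofSubfield 𝒜 ⊤ O → D ≤ O → b ∈ O) : IsIntegral D b := by
  by_cases h0 : b = 0
  · rw [h0]; exact isIntegral_zero
  by_cases h1 : (1 : L) ∈ Submodule.span (adj D (Ring.inverse b)) {Ring.inverse b}
  · obtain ⟨a, ha⟩ := Submodule.mem_span_singleton.mp h1
    rw [Algebra.smul_def] at ha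
    change (a : L) * Ring.inverse b = 1 at ha
    obtain ⟨p, hp⟩ := a.2
    refine isIntegral_of_inv (hL.mul_inv hb h0) p ?_
    have hp' : aeval (Ring.inverse b) p = (a : L) := hp
    rw [hp']
    calc (a : L) = a * (Ring.inverse b * b) := by rw [hL.inv_mul hb h0, mul_one]
      _ = b := by rw [← mul_assoc, ha, one_mul]
  · obtain ⟨O, hO, hDO, hs⟩ := dominate hL (isGradedSubfield_top 𝒜)
      (adj_graded hD (hL.inv_homog hb)) le_top
      (by rintro x rfl; exact self_mem_adj D _)
      (by rintro x rfl; exact hL.inv_homog hb) h1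
    have := hs _ rfl (hL.inv_ne hb h0)
    rw [hL.inv_inv hb h0] at this
    exact absurd (h O hO ((le_adj D _).trans hDO)) this

/-- graded valuation rings are integrally closed -/
lemma gvr_integral (hL : 𝒜.IsGradedField) {F O : Subring L} (hO : IsGVRofSubfield 𝒜 F O) {x : L}
    (hxF : x ∈ F) (hx : 𝒜.IsHomog x) (hi : IsIntegral O x) : x ∈ O := by
  by_cases h0 : x = 0
  · rw [h0]; exact zero_mem _
  rcases hO.2.2 x hxF h0 hx with h | h
  · exact h
  · exact mem_of_integral_inv (hL.mul_inv hx h0) h hi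

lemma isIntegral_mono {S T : Subring L} (h : S ≤ T) {x : L} (hx : IsIntegral S x) :
    IsIntegral T x := by
  obtain ⟨p, hp, hpx⟩ := hx
  refine ⟨p.map (Subring.inclusion h), hp.map _, ?_⟩
  rw [eval₂_map]
  exact hpx

end Domination

end GradedStr


section IntegralGeneral

variable {R : Type*} [CommRing R]

lemma integral_mono_ring {S T : Subring R} (h : S ≤ T) {x : R} (hx : IsIntegral S x) :
    IsIntegral T x := by
  obtain ⟨p, hp, hpx⟩ := hx
  refine ⟨p.map (Subring.inclusion h), hp.map _, ?_⟩
  rw [eval₂_map]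
  exact hpx

lemma integral_of_mem {S : Subring R} {x : R} (hx : x ∈ S) : IsIntegral S x :=
  isIntegral_algebraMap (R := S) (A := R) (x := ⟨x, hx⟩)

/-- the integral closure as a subring -/
def icl (S : Subring R) : Subring R := (integralClosure S R).toSubring

lemma mem_icl {S : Subring R} {x : R} : x ∈ icl S ↔ IsIntegral S x := Iff.rfl

lemma integral_trans_ring {S T : Subring R} (h : ∀ x ∈ T, IsIntegral S x) {x : R}
    (hx : IsIntegral T x) : IsIntegral S x := by
  have h2 : IsIntegral (icl S) x := integral_mono_ring (T := icl S) (fun y hy => h y hy) hx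
  have h3 : IsIntegral (integralClosure S R) x := h2
  exact isIntegral_trans (R := S) (A := integralClosure S R) x h3

lemma integral_sup {S T U : Subring R} (h1 : ∀ x ∈ S, IsIntegral U x)
    (h2 : ∀ x ∈ T, IsIntegral U x) {x : R} (hx : x ∈ S ⊔ T) : IsIntegral U x := by
  have : S ⊔ T ≤ icl U := sup_le h1 h2
  exact this hx

/-- integral via a monic polynomial with coefficients in a subring -/
lemma integral_of_coeff {S : Subring R} {x : R} (p : R[X]) (hp : p.Monic)
    (hc : ∀ i, IsIntegral S (p.coeff i)) (hx : eval x p = 0) : IsIntegral S x := by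
  have hT : IsIntegral (icl S) x := by
    have hl : p ∈ Polynomial.lifts (icl S).subtype := by
      rw [Polynomial.lifts_iff_coeff_lifts]
      intro n
      exact ⟨⟨p.coeff n, hc n⟩, rfl⟩
    rcases subsingleton_or_nontrivial R with hs | hn
    · rw [Subsingleton.elim x 0]; exact isIntegral_zero
    obtain ⟨q, hq, -, hqm⟩ := Polynomial.lifts_and_degree_eq_and_monic hl hp
    refine ⟨q, hqm, ?_⟩
    rw [← hq, eval_map] at hx
    exact hx
  exact integral_trans_ring (fun y hy => hy) hT

end IntegralGeneral

namespace GradedStr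

section MaxIdeal

variable {G : Type u} [CommGroup G] {L : Type v} [CommRing L] {𝒜 : GradedStr G L}

/-- non-units -/
def NU (O : Subring L) (x : L) : Prop := x ∈ O ∧ (x ≠ 0 → Ring.inverse x ∉ O)

lemma nu_mul (hL : 𝒜.IsGradedField) {O : Subring L} {c x : L} (hc : c ∈ O) (hch : 𝒜.IsHomog c)
    (hx : NU O x) (hxh : 𝒜.IsHomog x) : NU O (c * x) := by
  refine ⟨MulMemClass.mul_mem hc hx.1, fun h0 hi => ?_⟩
  have hx0 : x ≠ 0 := by rintro rfl; simp at h0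
  apply hx.2 hx0
  have : Ring.inverse x = c * Ring.inverse (c * x) := by
    apply (hL.2 x hxh hx0).mul_left_cancel
    rw [hL.mul_inv hxh hx0, mul_left_comm, ← mul_assoc, hL.mul_inv (𝒜.isHomog_mul hch hxh) h0]
  rw [this]
  exact MulMemClass.mul_mem hc hi

lemma nu_add (hL : 𝒜.IsGradedField) {F O : Subring L} (hF : 𝒜.IsGradedSubfield F)
    (hO : IsGVRofSubfield 𝒜 F O) {g : G} {x y : L} (hxg : x ∈ 𝒜.deg g) (hyg : y ∈ 𝒜.deg g)
    (hx : NU O x) (hy : NU O y) : NU O (x + y) := by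
  by_cases hx0 : x = 0
  · rw [hx0, zero_add]; exact hy
  by_cases hy0 : y = 0
  · rw [hy0, add_zero]; exact hx
  have hxh : 𝒜.IsHomog x := ⟨g, hxg⟩
  have hyh : 𝒜.IsHomog y := ⟨g, hyg⟩
  have aux : ∀ a b : L, a ∈ 𝒜.deg g → b ∈ 𝒜.deg g → b ≠ 0 → NU O b → a ∈ F →
      a * Ring.inverse b ∈ O → NU O (a + b) := by
    intro a b ha hb hb0 hbn haF hab
    have hbh : 𝒜.IsHomog b := ⟨g, hb⟩
    have e : a + b = (a * Ring.inverse b + 1) * b := by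
      rw [add_mul, mul_assoc, hL.inv_mul hbh hb0]; ring
    rw [e]
    refine nu_mul hL (add_mem hab (OneMemClass.one_mem _)) ⟨1, ?_⟩ hbn hbh
    refine add_mem ?_ 𝒜.one_mem
    have := 𝒜.mul_mem ha (𝒜.inv_mem' hb (hL.2 b hbh hb0))
    rwa [mul_inv_cancel] at this
  have hxF := hO.1 hx.1
  have hyF := hO.1 hy.1
  have hq : x * Ring.inverse y ∈ F := MulMemClass.mul_mem hxF (hF.2 y hyF hyh hy0)
  have hqh := 𝒜.isHomog_mul hxh (hL.inv_homog hyh)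
  have hq0 := hL.mul_ne hxh hx0 (hL.inv_ne hyh hy0)
  rcases hO.2.2 _ hq hq0 hqh with h | h
  · exact aux x y hxg hyg hy0 hy hxF h
  · rw [add_comm]
    refine aux y x hyg hxg hx0 hx hyF ?_
    have e : y * Ring.inverse x = Ring.inverse (x * Ring.inverse y) := by
      apply (hL.2 _ hqh hq0).mul_left_cancel
      rw [hL.mul_inv hqh hq0]
      calc _ = (x * Ring.inverse x) * (Ring.inverse y * y) := by ring
        _ = 1 := by rw [hL.mul_inv hxh hx0, hL.inv_mul hyh hy0, mul_one]
    rw [e]; exact h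

/-- the graded maximal ideal of a graded valuation ring -/
def mx (hL : 𝒜.IsGradedField) {F O : Subring L} (hF : 𝒜.IsGradedSubfield F)
    (hO : IsGVRofSubfield 𝒜 F O) : Ideal O where
  carrier := {x | ∀ g, NU O (𝒜.comp x g)}
  zero_mem' := by
    intro g
    change NU O (𝒜.comp 0 g)
    rw [comp_zero']
    exact ⟨zero_mem _, fun h => absurd rfl h⟩
  add_mem' := by
    intro x y hx hy g
    change NU O (𝒜.comp ((x : L) + y) g)
    rw [𝒜.comp_add]
    exact nu_add hL hF hO (𝒜.comp_mem _ _) (𝒜.comp_mem _ _) (hx g) (hy g)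
  smul_mem' := by
    intro c x hx g
    change NU O (𝒜.comp ((c : L) * x) g)
    have hxy : (c : L) * x = ∑ h ∈ (𝒜.finite_support (c : L)).toFinset, 𝒜.comp (c : L) h * x := by
      rw [← Finset.sum_mul, 𝒜.sum_comp']
    rw [hxy, comp_sum']
    refine (Finset.sum_induction (p := fun z => z ∈ 𝒜.deg g ∧ NU O z) _ ?_ ?_ ?_).2
    · rintro a b ⟨h1, h2⟩ ⟨h3, h4⟩
      exact ⟨add_mem h1 h3, nu_add hL hF hO h1 h3 h2 h4⟩
    · exact ⟨zero_mem _, zero_mem _, fun h => absurd rfl h⟩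
    · intro h _
      refine ⟨𝒜.comp_mem _ _, ?_⟩
      rw [𝒜.comp_mul_left' (𝒜.comp_mem (c : L) h)]
      exact nu_mul hL (hO.2.1 _ c.2 _) (𝒜.isHomog_comp _ _) (hx _) (𝒜.isHomog_comp _ _)

variable (hL : 𝒜.IsGradedField) {F O : Subring L} (hF : 𝒜.IsGradedSubfield F)
    (hO : IsGVRofSubfield 𝒜 F O)

lemma mem_mx {x : O} : x ∈ mx hL hF hO ↔ ∀ g, NU O (𝒜.comp (x : L) g) := Iff.rfl

lemma mem_mx_homog {x : O} (hx : 𝒜.IsHomog (x : L)) : x ∈ mx hL hF hO ↔ NU O (x : L) := by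
  rw [mem_mx]
  constructor
  · intro h
    obtain ⟨g, hg⟩ := hx
    have := h g
    rwa [𝒜.comp_of_mem hg] at this
  · intro h g
    rcases 𝒜.comp_homog hx g with e | e <;> rw [e]
    · exact h
    · exact ⟨zero_mem _, fun h => absurd rfl h⟩

lemma unit_of_not_mem_mx {x : O} (hx : 𝒜.IsHomog (x : L)) (h : x ∉ mx hL hF hO) :
    (x : L) ≠ 0 ∧ Ring.inverse (x : L) ∈ O := by
  rw [mem_mx_homog hL hF hO hx] at h
  constructor
  · intro h0; exact h ⟨x.2, fun h1 => absurd h0 h1⟩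
  · by_contra hc
    exact h ⟨x.2, fun _ => hc⟩

lemma not_mem_mx {x : O} (hx : 𝒜.IsHomog (x : L)) (h0 : (x : L) ≠ 0)
    (h : Ring.inverse (x : L) ∈ O) : x ∉ mx hL hF hO := by
  rw [mem_mx_homog hL hF hO hx]
  exact fun h' => h'.2 h0 h

lemma one_not_mem_mx : (1 : O) ∉ mx hL hF hO := by
  refine not_mem_mx hL hF hO (x := 1) 𝒜.isHomog_one hL.one_ne ?_
  rw [Subring.coe_one, Ring.inverse_one]
  exact OneMemClass.one_mem _

lemma mx_subfield {E : Subring L} (hE : 𝒜.IsGradedSubfield E) (hEO : E ≤ O) {x : O}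
    (hx : (x : L) ∈ E) (hm : x ∈ mx hL hF hO) : x = 0 := by
  ext
  refine 𝒜.eq_zero_of_comp fun g => ?_
  by_contra h0
  exact (hm g).2 h0 (hEO (hE.2 _ (hE.1 _ hx g) (𝒜.isHomog_comp _ _) h0))

/-- image of a subring in the residue ring -/
def rb {O : Subring L} (M : Ideal O) (E : Subring L) : Subring (O ⧸ M) :=
  (E.comap O.subtype).map (Ideal.Quotient.mk M)

lemma mem_rb {O : Subring L} {M : Ideal O} {E : Subring L} {x : O} (hx : (x : L) ∈ E) :
    Ideal.Quotient.mk M x ∈ rb M E := ⟨x, hx, rfl⟩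

lemma rb_mono {O : Subring L} {M : Ideal O} {E E' : Subring L} (h : E ≤ E') :
    rb M E ≤ rb M E' := by
  rintro _ ⟨x, hx, rfl⟩
  exact mem_rb (h hx)

/-- the map E → rb E -/
def toRb {O : Subring L} (M : Ideal O) {E : Subring L} (hE : E ≤ O) : E →+* rb M E :=
  ((Ideal.Quotient.mk M).comp (Subring.inclusion hE)).codRestrict (rb M E)
    (fun x => mem_rb (M := M) (x := ⟨x.1, hE x.2⟩) x.2)

lemma toRb_surj {O : Subring L} (M : Ideal O) {E : Subring L} (hE : E ≤ O) :
    Function.Surjective (toRb M hE) := by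
  rintro ⟨_, x, hx, rfl⟩
  exact ⟨⟨x, hx⟩, rfl⟩

lemma mk_aeval {O : Subring L} (M : Ideal O) {E : Subring L} (hE : E ≤ O) (x : O) (p : E[X]) :
    aeval (Ideal.Quotient.mk M x) (p.map (toRb M hE)) =
      Ideal.Quotient.mk M ⟨aeval (x : L) p, aeval_mem hE x.2 p⟩ := by
  have e : (⟨aeval (x : L) p, aeval_mem hE x.2 p⟩ : O) = eval₂ (Subring.inclusion hE) x p := by
    ext
    change aeval (x : L) p = O.subtype (eval₂ (Subring.inclusion hE) x p)
    rw [hom_eval₂]; rfl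
  rw [e, hom_eval₂, aeval_def, eval₂_map]
  rfl

lemma rb_integral_iff {O : Subring L} (M : Ideal O) {E : Subring L} (hE : E ≤ O) (x : O) :
    IsIntegral (rb M E) (Ideal.Quotient.mk M x) ↔
      ∃ p : E[X], p.Monic ∧ (⟨aeval (x : L) p, aeval_mem hE x.2 p⟩ : O) ∈ M := by
  constructor
  · rintro ⟨q, hq, hqx⟩
    have hl : q ∈ Polynomial.lifts (toRb M hE) := by
      rw [Polynomial.lifts_iff_coeff_lifts]
      intro n
      exact toRb_surj M hE _
    rcases subsingleton_or_nontrivial (rb M E) with hs | hn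
    · refine ⟨1, monic_one, ?_⟩
      rw [← Ideal.Quotient.eq_zero_iff_mem]
      have h10 := congrArg Subtype.val (Subsingleton.elim (1 : rb M E) 0)
      change (1 : O ⧸ M) = 0 at h10
      rw [← mul_one (Ideal.Quotient.mk M _), h10, mul_zero]
    obtain ⟨p, hp, -, hpm⟩ := Polynomial.lifts_and_degree_eq_and_monic hl hq
    refine ⟨p, hpm, ?_⟩
    rw [← Ideal.Quotient.eq_zero_iff_mem, ← mk_aeval M hE, hp]
    exact hqx
  · rintro ⟨p, hp, hpx⟩
    refine ⟨p.map (toRb M hE), hp.map _, ?_⟩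
    rw [← aeval_def, mk_aeval M hE]
    exact Ideal.Quotient.eq_zero_iff_mem.mpr hpx

end MaxIdeal

section ResAlg

variable {G : Type u} [CommGroup G] {L : Type v} [CommRing L] {𝒜 : GradedStr G L}

/-- existence of a residually algebraic graded valuation ring -/
theorem exists_resalg (hL : 𝒜.IsGradedField) {k K : Subring L} (hk : 𝒜.IsGradedSubfield k)
    (hK : 𝒜.IsGradedSubfield K) (hkK : k ≤ K) :
    ∃ (O : Subring L) (hO : IsGVRofSubfield 𝒜 K O), k ≤ O ∧
      ∀ x : O, 𝒜.IsHomog (x : L) →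
        IsIntegral (rb (mx hL hK hO) k) (Ideal.Quotient.mk (mx hL hK hO) x) := by
  let Z : Set (Subring L)ᵒᵈ := {S | IsGVRofSubfield 𝒜 K (OrderDual.ofDual S) ∧
    k ≤ OrderDual.ofDual S}
  obtain ⟨O, -, hmax⟩ := zorn_le_nonempty₀ Z (by
    intro c hcZ hc S hS
    refine ⟨OrderDual.toDual (sInf (OrderDual.toDual ⁻¹' c)), ⟨⟨?_, ?_, ?_⟩, ?_⟩, ?_⟩
    · exact (sInf_le (show OrderDual.ofDual S ∈ OrderDual.toDual ⁻¹' c from hS)).trans (hcZ hS).1.1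
    · intro x hx g
      change x ∈ sInf (OrderDual.toDual ⁻¹' c) at hx
      change _ ∈ sInf (OrderDual.toDual ⁻¹' c)
      rw [Subring.mem_sInf] at hx ⊢
      exact fun T hT => (hcZ hT).1.2.1 x (hx T hT) g
    · intro f hf h0 hh
      change f ∈ sInf (OrderDual.toDual ⁻¹' c) ∨ _ ∈ sInf (OrderDual.toDual ⁻¹' c)
      rw [Subring.mem_sInf, Subring.mem_sInf]
      by_contra hcon
      push Not at hcon
      obtain ⟨⟨S, hS, h1⟩, ⟨T, hT, h2⟩⟩ := hcon
      rcases hc.total hS hT with hST | hST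
      · have hST' : T ≤ S := hST
        rcases (hcZ hT).1.2.2 f hf h0 hh with h | h
        · exact h1 (hST' h)
        · exact h2 h
      · have hST' : S ≤ T := hST
        rcases (hcZ hS).1.2.2 f hf h0 hh with h | h
        · exact h1 h
        · exact h2 (hST' h)
    · exact le_sInf fun T hT => (hcZ hT).2
    · intro T hT
      exact sInf_le (show OrderDual.ofDual T ∈ OrderDual.toDual ⁻¹' c from hT))
    (OrderDual.toDual K) ⟨⟨le_rfl, hK.1, fun f hf _ _ => Or.inl hf⟩, hkK⟩
  obtain ⟨hO, hkO⟩ := hmax.prop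
  have hmin : ∀ O'' : Subring L, IsGVRofSubfield 𝒜 K O'' → k ≤ O'' → O'' ≤ OrderDual.ofDual O →
      OrderDual.ofDual O ≤ O'' := by
    intro O'' h1 h2 h3
    exact hmax.le_of_ge (y := OrderDual.toDual O'') ⟨h1, h2⟩ h3
  generalize OrderDual.ofDual O = O at hO hkO hmin
  refine ⟨O, hO, hkO, fun x hx => ?_⟩
  set M := mx hL hK hO with hM
  by_contra hni
  have hxM : x ∉ M := by
    intro h
    rw [Ideal.Quotient.eq_zero_iff_mem.mpr h] at hni
    exact hni isIntegral_zero
  obtain ⟨hx0, hxi⟩ := unit_of_not_mem_mx hL hK hO hx hxM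
  set e : L := Ring.inverse (x : L) with he
  let e' : O := ⟨e, hxi⟩
  have heh : 𝒜.IsHomog e := hL.inv_homog hx
  have he0 : e ≠ 0 := hL.inv_ne hx hx0
  let s : Set L := {e} ∪ {m | 𝒜.IsHomog m ∧ ∃ h : m ∈ O, (⟨m, h⟩ : O) ∈ M}
  let D : Subring L := Subring.closure (↑k ∪ s)
  have hsh : ∀ y ∈ s, 𝒜.IsHomog y := by
    rintro y (rfl | hy)
    · exact heh
    · exact hy.1
  have hsO : s ⊆ O := by
    rintro y (rfl | ⟨-, hy, -⟩)
    · exact hxi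
    · exact hy
  have hDO : D ≤ O := by
    rw [Subring.closure_le]
    exact Set.union_subset hkO hsO
  have hDg : 𝒜.IsGradedSubring D := graded_closure_union hk.1 hsh
  have hsD : s ⊆ D := fun y hy => Subring.subset_closure (Or.inr hy)
  by_cases h1 : (1 : L) ∈ Submodule.span D s
  · have hDim : D ≤ ((adj (rb M k) (Ideal.Quotient.mk M e')).comap
        (Ideal.Quotient.mk M)).map O.subtype := by
      rw [Subring.closure_le]
      rintro y (hy | rfl | ⟨-, hy, hm⟩)
      · exact ⟨⟨y, hkO hy⟩, le_adj _ _ (mem_rb hy), rfl⟩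
      · exact ⟨e', self_mem_adj _ _, rfl⟩
      · refine ⟨⟨y, hy⟩, ?_, rfl⟩
        change Ideal.Quotient.mk M _ ∈ adj (rb M k) (Ideal.Quotient.mk M e')
        rw [Ideal.Quotient.eq_zero_iff_mem.mpr hm]
        exact zero_mem _
    have hsp : ∀ y ∈ Submodule.span D s, ∃ a ∈ D, ∃ m ∈ M, y = a * e + (m : O) := by
      intro y hy
      induction hy using Submodule.span_induction with
      | mem y hy =>
        rcases hy with rfl | ⟨-, hy, hm⟩
        · exact ⟨1, OneMemClass.one_mem _, 0, zero_mem _, by simp⟩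
        · exact ⟨0, zero_mem _, ⟨y, hy⟩, hm, by simp⟩
      | zero => exact ⟨0, zero_mem _, 0, zero_mem _, by simp⟩
      | add y z _ _ hy hz =>
        obtain ⟨a, ha, m, hm, rfl⟩ := hy
        obtain ⟨b, hb, n, hn, rfl⟩ := hz
        exact ⟨a + b, add_mem ha hb, m + n, add_mem hm hn, by push_cast; ring⟩
      | smul c y _ hy =>
        obtain ⟨a, ha, m, hm, rfl⟩ := hy
        refine ⟨c * a, MulMemClass.mul_mem c.2 ha, ⟨c, hDO c.2⟩ * m, M.mul_mem_left _ hm, ?_⟩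
        rw [Algebra.smul_def]
        change (c : L) * _ = c * a * e + c * m
        ring
    obtain ⟨a, ha, m, hm, h1⟩ := hsp 1 h1
    obtain ⟨a', ha', haa⟩ := hDim ha
    obtain ⟨q, hq⟩ := ha'
    have e1 : (1 : O) = a' * e' + m := by
      ext
      rw [Subring.coe_one, h1, ← haa]; rfl
    have hxe : Ideal.Quotient.mk M x * Ideal.Quotient.mk M e' = 1 := by
      rw [← map_mul, ← map_one (Ideal.Quotient.mk M)]
      congr 1
      ext
      exact hL.mul_inv hx hx0
    refine hni (isIntegral_of_inv hxe q ?_)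
    have hq' : aeval (Ideal.Quotient.mk M e') q = Ideal.Quotient.mk M a' := hq
    rw [hq']
    have e2 := congrArg (Ideal.Quotient.mk M) e1
    rw [map_one, map_add, Ideal.Quotient.eq_zero_iff_mem.mpr hm, add_zero, map_mul] at e2
    calc _ = Ideal.Quotient.mk M a' * (Ideal.Quotient.mk M x * Ideal.Quotient.mk M e') := by
            rw [hxe, mul_one]
      _ = Ideal.Quotient.mk M x * (Ideal.Quotient.mk M a' * Ideal.Quotient.mk M e') := by ring
      _ = _ := by rw [← e2, mul_one]
  · obtain ⟨O'', hO'', hDO'', hs⟩ := dominate hL hK hDg (hDO.trans hO.1) hsD hsh h1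
    have hle : O'' ≤ O := by
      refine hO''.2.1.le_of_homog fun y hy hyh => ?_
      by_contra hyO
      have hy0 : y ≠ 0 := by rintro rfl; exact hyO (zero_mem _)
      have hyi : Ring.inverse y ∈ O := (hO.2.2 y (hO''.1 hy) hy0 hyh).resolve_left hyO
      have hys : Ring.inverse y ∈ s := by
        right
        refine ⟨hL.inv_homog hyh, hyi, ?_⟩
        rw [hM, mem_mx_homog hL hK hO (hL.inv_homog hyh)]
        refine ⟨hyi, fun _ => ?_⟩
        change Ring.inverse (Ring.inverse y) ∉ O
        rw [hL.inv_inv hyh hy0]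
        exact hyO
      have := hs _ hys (hL.inv_ne hyh hy0)
      rw [hL.inv_inv hyh hy0] at this
      exact this hy
    have hxO := hmin O'' hO'' (le_trans (fun y hy => Subring.subset_closure (Or.inl hy)) hDO'') hle
      x.2
    have := hs e (Or.inl rfl) he0
    rw [he, hL.inv_inv hx hx0] at this
    exact this hxO

end ResAlg

end GradedStr


namespace GradedStr

section Loc

variable {G : Type u} [CommGroup G] {L : Type v} [CommRing L] {𝒜 : GradedStr G L}

/-- graded localization of `S` at the nonzero homogeneous elements of `T`, inside `L` -/
def loc (hL : 𝒜.IsGradedField) (T S : Subring L) (h : T ≤ S) : Subring L where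
  carrier := {x | ∃ s ∈ T, 𝒜.IsHomog s ∧ s ≠ 0 ∧ s * x ∈ S}
  zero_mem' := ⟨1, OneMemClass.one_mem _, 𝒜.isHomog_one, hL.one_ne, by
    rw [mul_zero]; exact zero_mem _⟩
  one_mem' := ⟨1, OneMemClass.one_mem _, 𝒜.isHomog_one, hL.one_ne, by
    rw [mul_one]; exact OneMemClass.one_mem _⟩
  add_mem' := by
    rintro x y ⟨s, hs, hsh, hs0, hx⟩ ⟨r, hr, hrh, hr0, hy⟩
    refine ⟨s * r, MulMemClass.mul_mem hs hr, 𝒜.isHomog_mul hsh hrh, hL.mul_ne hsh hs0 hr0, ?_⟩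
    have e : s * r * (x + y) = r * (s * x) + s * (r * y) := by ring
    rw [e]
    exact add_mem (MulMemClass.mul_mem (h hr) hx) (MulMemClass.mul_mem (h hs) hy)
  mul_mem' := by
    rintro x y ⟨s, hs, hsh, hs0, hx⟩ ⟨r, hr, hrh, hr0, hy⟩
    refine ⟨s * r, MulMemClass.mul_mem hs hr, 𝒜.isHomog_mul hsh hrh, hL.mul_ne hsh hs0 hr0, ?_⟩
    have e : s * r * (x * y) = (s * x) * (r * y) := by ring
    rw [e]
    exact MulMemClass.mul_mem hx hy
  neg_mem' := by
    rintro x ⟨s, hs, hsh, hs0, hx⟩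
    exact ⟨s, hs, hsh, hs0, by rw [mul_neg]; exact neg_mem hx⟩

variable (hL : 𝒜.IsGradedField)

lemma mem_loc {T S : Subring L} {h : T ≤ S} {x : L} :
    x ∈ loc hL T S h ↔ ∃ s ∈ T, 𝒜.IsHomog s ∧ s ≠ 0 ∧ s * x ∈ S := Iff.rfl

lemma le_loc {T S : Subring L} (h : T ≤ S) : S ≤ loc hL T S h := fun x hx =>
  ⟨1, OneMemClass.one_mem _, 𝒜.isHomog_one, hL.one_ne, by rwa [one_mul]⟩

lemma loc_mono {T S T' S' : Subring L} (h : T ≤ S) (h' : T' ≤ S') (hT : T ≤ T') (hS : S ≤ S') :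
    loc hL T S h ≤ loc hL T' S' h' := by
  rintro x ⟨s, hs, hsh, hs0, hx⟩
  exact ⟨s, hT hs, hsh, hs0, hS hx⟩

lemma loc_graded {T S : Subring L} (h : T ≤ S) (hS : 𝒜.IsGradedSubring S) :
    𝒜.IsGradedSubring (loc hL T S h) := by
  rintro x ⟨s, hs, ⟨i, hi⟩, hs0, hx⟩ g
  refine ⟨s, hs, ⟨i, hi⟩, hs0, ?_⟩
  rw [← 𝒜.comp_mul_left hi]
  exact hS _ hx _

lemma fr_subfield {S : Subring L} (hS : 𝒜.IsGradedSubring S) :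
    𝒜.IsGradedSubfield (loc hL S S le_rfl) := by
  refine ⟨loc_graded hL _ hS, ?_⟩
  rintro x ⟨s, hs, hsh, hs0, hx⟩ hxh hx0
  refine ⟨s * x, hx, 𝒜.isHomog_mul hsh hxh, hL.mul_ne hsh hs0 hx0, ?_⟩
  rw [mul_assoc, hL.mul_inv hxh hx0, mul_one]
  exact hs

lemma loc_le {T S l : Subring L} (h : T ≤ S) (hl : 𝒜.IsGradedSubfield l) (hS : S ≤ l) :
    loc hL T S h ≤ l := by
  rintro x ⟨s, hs, hsh, hs0, hx⟩
  have e : x = Ring.inverse s * (s * x) := by rw [← mul_assoc, hL.inv_mul hsh hs0, one_mul]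
  rw [e]
  exact MulMemClass.mul_mem (hl.2 s (hS (h hs)) hsh hs0) (hS hx)

end Loc

section RStep

variable {G : Type u} [CommGroup G] {L : Type v} [CommRing L] {𝒜 : GradedStr G L}

/-- residual integrality invariant -/
def RInv (𝒜 : GradedStr G L) {O : Subring L} (M : Ideal O) (E F : Subring L) : Prop :=
  ∀ x : O, 𝒜.IsHomog (x : L) → (x : L) ∈ F → IsIntegral (rb M E) (Ideal.Quotient.mk M x)

lemma exists_max_val (hL : 𝒜.IsGradedField) {O : Subring L} (hO : IsGVRofSubfield 𝒜 ⊤ O)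
    (s : Finset L) (hs : s.Nonempty) (hh : ∀ x ∈ s, 𝒜.IsHomog x ∧ x ≠ 0) :
    ∃ y ∈ s, ∀ x ∈ s, Ring.inverse y * x ∈ O := by
  induction hs using Finset.Nonempty.cons_induction with
  | singleton a =>
    refine ⟨a, by simp, fun x hx => ?_⟩
    obtain rfl : x = a := by simpa using hx
    rw [hL.inv_mul (hh x (by simp)).1 (hh x (by simp)).2]
    exact OneMemClass.one_mem _
  | cons a s ha hs ih =>
    obtain ⟨y, hy, hyx⟩ := ih fun x hx => hh x (by simp [hx])
    obtain ⟨hah, ha0⟩ := hh a (by simp)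
    obtain ⟨hyh, hy0⟩ := hh y (by simp [hy])
    have hqh := 𝒜.isHomog_mul (hL.inv_homog hyh) hah
    have hq0 := hL.mul_ne (hL.inv_homog hyh) (hL.inv_ne hyh hy0) ha0
    rcases hO.2.2 (Ring.inverse y * a) trivial hq0 hqh with h | h
    · refine ⟨y, by simp [hy], fun x hx => ?_⟩
      rcases Finset.mem_cons.mp hx with rfl | hx
      · exact h
      · exact hyx x hx
    · refine ⟨a, by simp, fun x hx => ?_⟩
      rcases Finset.mem_cons.mp hx with rfl | hx
      · rw [hL.inv_mul hah ha0]; exact OneMemClass.one_mem _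
      · have e : Ring.inverse a * x = Ring.inverse (Ring.inverse y * a) * (Ring.inverse y * x) := by
          apply (hL.2 _ hqh hq0).mul_left_cancel
          rw [← mul_assoc _ _ (Ring.inverse y * x), hL.mul_inv hqh hq0]
          calc _ = (a * Ring.inverse a) * (Ring.inverse y * x) := by ring
            _ = _ := by rw [hL.mul_inv hah ha0]
        rw [e]
        exact MulMemClass.mul_mem h (hyx x hx)

lemma normalize (hL : 𝒜.IsGradedField) {O F : Subring L} (hO : IsGVRofSubfield 𝒜 ⊤ O)
    (hF : 𝒜.IsGradedSubfield F) {g : G} {p : F[X]} (h0 : p ≠ 0) (hp : 𝒜.HP g p) :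
    ∃ y ∈ F, 𝒜.IsHomog y ∧ y ≠ 0 ∧ ∃ p0 : O[X],
      (∀ n, (p0.coeff n : L) ∈ F ∧ 𝒜.IsHomog (p0.coeff n : L)) ∧
      p0.map (Ideal.Quotient.mk (mx hL (isGradedSubfield_top 𝒜) hO)) ≠ 0 ∧
      p.map F.subtype = C y * p0.map O.subtype := by
  classical
  let s : Finset L := p.support.image fun n => (p.coeff n : L)
  have hs : s.Nonempty := (nonempty_support_iff.mpr h0).image _
  obtain ⟨y, hys, hy⟩ := exists_max_val hL hO s hs (by
    intro x hx
    obtain ⟨n, hn, rfl⟩ := Finset.mem_image.mp hx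
    refine ⟨hp.coeff n, ?_⟩
    simpa using mem_support_iff.mp hn)
  obtain ⟨n, hn, hny⟩ := Finset.mem_image.mp hys
  have hyF : y ∈ F := by rw [← hny]; exact (p.coeff n).2
  have hyh : 𝒜.IsHomog y := by rw [← hny]; exact hp.coeff n
  have hy0 : y ≠ 0 := by rw [← hny]; simpa using mem_support_iff.mp hn
  have hl : C (Ring.inverse y) * p.map F.subtype ∈ Polynomial.lifts O.subtype := by
    rw [lifts_iff_coeff_lifts]
    intro m
    rw [coeff_C_mul, coeff_map]
    by_cases hm : p.coeff m = 0
    · exact ⟨0, by simp [hm]⟩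
    · exact ⟨⟨_, hy _ (Finset.mem_image.mpr ⟨m, mem_support_iff.mpr hm, rfl⟩)⟩, rfl⟩
  obtain ⟨p0, hp0⟩ := (Polynomial.mem_lifts _).mp hl
  have hc : ∀ m, (p0.coeff m : L) = Ring.inverse y * p.coeff m := by
    intro m
    have := congrArg (fun q => q.coeff m) hp0
    simp only [coeff_map, coeff_C_mul] at this
    exact this
  refine ⟨y, hyF, hyh, hy0, p0, ?_, ?_, ?_⟩
  · intro m
    rw [hc]
    exact ⟨MulMemClass.mul_mem (hF.2 y hyF hyh hy0) (p.coeff m).2,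
      𝒜.isHomog_mul (hL.inv_homog hyh) (hp.coeff m)⟩
  · intro h
    have h1 := congrArg (fun q => q.coeff n) h
    simp only [coeff_map, coeff_zero] at h1
    rw [Ideal.Quotient.eq_zero_iff_mem] at h1
    have h2 : p0.coeff n = 1 := by
      ext
      rw [hc]
      change Ring.inverse y * (p.coeff n : L) = 1
      rw [hny, hL.inv_mul hyh hy0]
    rw [h2] at h1
    exact one_not_mem_mx hL _ hO h1
  · rw [hp0, ← mul_assoc, ← C_mul, hL.mul_inv hyh hy0, C_1, one_mul]

lemma rkey (hL : 𝒜.IsGradedField) {O l : Subring L} (hO : IsGVRofSubfield 𝒜 ⊤ O)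
    (hl : 𝒜.IsGradedSubfield l) (hlO : l ≤ O) {E F : Subring L} (hEl : E ≤ l) (hF : 𝒜.IsGradedSubfield F)
    (hR : RInv 𝒜 (mx hL (isGradedSubfield_top 𝒜) hO) E F) {t : O} (ht : (t : L) ∈ l)
    (htr : ∀ p : E[X], aeval (t : L) p = 0 → p = 0) (p : O[X])
    (hp : ∀ n, (p.coeff n : L) ∈ F ∧ 𝒜.IsHomog (p.coeff n : L))
    (h : eval t p ∈ mx hL (isGradedSubfield_top 𝒜) hO) :
    p.map (Ideal.Quotient.mk (mx hL (isGradedSubfield_top 𝒜) hO)) = 0 := by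
  set M := mx hL (isGradedSubfield_top 𝒜) hO with hM
  by_contra hne
  set P := p.map (Ideal.Quotient.mk M) with hP
  set N := P.natDegree
  have hc : p.coeff N ∉ M := by
    rw [← Ideal.Quotient.eq_zero_iff_mem, ← coeff_map, ← hP]
    exact leadingCoeff_ne_zero.mpr hne
  obtain ⟨hF0, hH⟩ := hp N
  obtain ⟨hc0, hci⟩ := unit_of_not_mem_mx hL _ hO hH hc
  let c' : O := ⟨_, hci⟩
  have hmon : (C (Ideal.Quotient.mk M c') * P).Monic := by
    apply monic_C_mul_of_mul_leadingCoeff_eq_one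
    change _ * P.coeff N = 1
    rw [hP, coeff_map, ← map_mul, ← map_one (Ideal.Quotient.mk M)]
    congr 1
    ext
    exact hL.inv_mul hH hc0
  have hint : IsIntegral (rb M E) (Ideal.Quotient.mk M t) := by
    refine integral_of_coeff _ hmon ?_ ?_
    · intro i
      rw [coeff_C_mul, hP, coeff_map, ← map_mul]
      refine hR _ ?_ ?_
      · exact 𝒜.isHomog_mul (hL.inv_homog hH) (hp i).2
      · exact MulMemClass.mul_mem (hF.2 _ hF0 hH hc0) (hp i).1
    · rw [eval_mul, hP, eval_map_apply, Ideal.Quotient.eq_zero_iff_mem.mpr h, mul_zero]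
  rw [rb_integral_iff M (hEl.trans hlO)] at hint
  obtain ⟨q, hq, hqM⟩ := hint
  have h0 := mx_subfield hL _ hO hl hlO (aeval_mem hEl ht q) hqM
  have h1 := htr q (congrArg Subtype.val h0)
  rw [h1] at hq
  have h10 := congrArg Subtype.val hq.leadingCoeff
  simp only [leadingCoeff_zero] at h10
  exact hL.one_ne h10.symm

lemma factor (hL : 𝒜.IsGradedField) {O l : Subring L} (hO : IsGVRofSubfield 𝒜 ⊤ O)
    (hl : 𝒜.IsGradedSubfield l) (hlO : l ≤ O) {E F : Subring L} (hEl : E ≤ l) (hF : 𝒜.IsGradedSubfield F)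
    (hR : RInv 𝒜 (mx hL (isGradedSubfield_top 𝒜) hO) E F) {t : O} (ht : (t : L) ∈ l)
    {g : G} (hg : (t : L) ∈ 𝒜.deg g)
    (htr : ∀ p : E[X], aeval (t : L) p = 0 → p = 0) {p : F[X]} (h0 : p ≠ 0) (hp : 𝒜.HP g p) :
    ∃ y ∈ F, 𝒜.IsHomog y ∧ y ≠ 0 ∧ ∃ p0 : O[X],
      (∀ n, (p0.coeff n : L) ∈ F ∧ 𝒜.IsHomog (p0.coeff n : L)) ∧
      𝒜.IsHomog ((eval t p0 : O) : L) ∧ ((eval t p0 : O) : L) ≠ 0 ∧ Ring.inverse ((eval t p0 : O) : L) ∈ O ∧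
      aeval (t : L) p = y * (eval t p0 : O) := by
  obtain ⟨y, hy, hyh, hy0, p0, hp0, hne, he⟩ := normalize hL hO hF h0 hp
  have he' : aeval (t : L) p = y * (eval t p0 : O) := by
    have := congrArg (eval (t : L)) he
    rw [eval_mul, eval_C, eval_map, eval_map] at this
    rw [aeval_def]
    refine this.trans ?_
    congr 1
    have := eval₂_at_apply (p := p0) O.subtype t
    exact this
  have hh : 𝒜.IsHomog ((eval t p0 : O) : L) := by
    have : ((eval t p0 : O) : L) = Ring.inverse y * aeval (t : L) p := by
      rw [he', ← mul_assoc, hL.inv_mul hyh hy0, one_mul]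
    rw [this]
    exact 𝒜.isHomog_mul (hL.inv_homog hyh) (hp.aeval hg)
  have hnM : eval t p0 ∉ mx hL (isGradedSubfield_top 𝒜) hO := fun h =>
    hne (rkey hL hO hl hlO hEl hF hR ht htr p0 hp0 h)
  obtain ⟨h1, h2⟩ := unit_of_not_mem_mx hL _ hO hh hnM
  exact ⟨y, hy, hyh, hy0, p0, hp0, hh, h1, h2, he'⟩

lemma transc (hL : 𝒜.IsGradedField) {O l : Subring L} (hO : IsGVRofSubfield 𝒜 ⊤ O)
    (hl : 𝒜.IsGradedSubfield l) (hlO : l ≤ O) {E F : Subring L} (hEl : E ≤ l) (hF : 𝒜.IsGradedSubfield F)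
    (hR : RInv 𝒜 (mx hL (isGradedSubfield_top 𝒜) hO) E F) {t : L} (ht : (t : L) ∈ l)
    {g : G} (hg : (t : L) ∈ 𝒜.deg g)
    (htr : ∀ p : E[X], aeval (t : L) p = 0 → p = 0) (p : F[X]) (hp : aeval t p = 0) : p = 0 := by
  by_contra h0
  obtain ⟨h, hh⟩ := exists_pc_ne hF.1 g h0
  obtain ⟨y, -, hyh, hy0, p0, -, -, h1, -, he⟩ :=
    factor hL hO hl hlO hEl hF hR (t := ⟨t, hlO ht⟩) ht hg htr hh (pc_HP _ _ _ _)
  change aeval t _ = _ at he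
  rw [pc_aeval hF.1 h p hg, hp, comp_zero'] at he
  exact hL.mul_ne hyh hy0 h1 he.symm

lemma res_inv (hL : 𝒜.IsGradedField) {O : Subring L} (hO : IsGVRofSubfield 𝒜 ⊤ O)
    {E : Subring L} (hE : 𝒜.IsGradedSubfield E) (hEO : E ≤ O) {u u' : O}
    (hu : 𝒜.IsHomog (u : L)) (huu : u * u' = 1)
    (hi : IsIntegral (rb (mx hL (isGradedSubfield_top 𝒜) hO) E)
      (Ideal.Quotient.mk (mx hL (isGradedSubfield_top 𝒜) hO) u)) :
    IsIntegral (rb (mx hL (isGradedSubfield_top 𝒜) hO) E)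
      (Ideal.Quotient.mk (mx hL (isGradedSubfield_top 𝒜) hO) u') := by
  set M := mx hL (isGradedSubfield_top 𝒜) hO with hM
  have huu' : Ideal.Quotient.mk M u * Ideal.Quotient.mk M u' = 1 := by
    rw [← map_mul, huu, map_one]
  obtain ⟨p, hp, hpM⟩ := (rb_integral_iff M hEO u).mp hi
  obtain ⟨g, hg⟩ := hu
  have hp0 : p ≠ 0 := by
    rintro rfl
    have h10 := congrArg Subtype.val hp.leadingCoeff
    simp only [leadingCoeff_zero] at h10
    exact hL.one_ne h10.symm
  obtain ⟨h, hh⟩ := exists_pc_ne hE.1 g hp0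
  have key : ∀ n : ℕ, ∀ q : E[X], q.natDegree ≤ n → q ≠ 0 → (∀ i, 𝒜.IsHomog (q.coeff i : L)) →
      aeval (Ideal.Quotient.mk M u) (q.map (toRb M hEO)) = 0 →
      ∃ r : (rb M E)[X], aeval (Ideal.Quotient.mk M u) r = Ideal.Quotient.mk M u' := by
    intro n
    induction n with
    | zero =>
      intro q hq h0 hc hz
      exfalso
      obtain ⟨c, rfl⟩ := natDegree_eq_zero.mp (Nat.le_zero.mp hq)
      have hc0 : (c : L) ≠ 0 := by
        intro h; apply h0; rw [show c = 0 from Subtype.ext h, C_0]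
      rw [mk_aeval M hEO, Ideal.Quotient.eq_zero_iff_mem] at hz
      have := mx_subfield hL _ hO hE hEO (x := ⟨aeval (u : L) (C c), _⟩)
        (by change aeval (u : L) (C c) ∈ E; rw [aeval_C]; exact c.2) hz
      have := congrArg Subtype.val this
      simp only [aeval_C] at this
      exact hc0 this
    | succ n ih =>
      intro q hq h0 hc hz
      by_cases hq0 : q.coeff 0 = 0
      · have e : q = divX q * X := by
          conv_lhs => rw [← divX_mul_X_add q, hq0, C_0, add_zero]
        refine ih (divX q) ?_ ?_ ?_ ?_
        · rw [natDegree_divX_eq_natDegree_tsub_one]; omega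
        · intro h1; rw [h1, zero_mul] at e; exact h0 e
        · intro i; rw [coeff_divX]; exact hc _
        · rw [e, Polynomial.map_mul, map_mul, map_X, aeval_X] at hz
          have := congrArg (· * Ideal.Quotient.mk M u') hz
          simp only [zero_mul] at this
          rwa [mul_assoc, huu', mul_one] at this
      · have hc0 : (q.coeff 0 : L) ≠ 0 := by simpa using hq0
        let w : E := ⟨_, hE.2 _ (q.coeff 0).2 (hc 0) hc0⟩
        have hw : w * q.coeff 0 = 1 := Subtype.ext (hL.inv_mul (hc 0) hc0)
        refine ⟨(C (-w) * divX q).map (toRb M hEO), ?_⟩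
        have e : (C (-w) * divX q) * X = 1 - C w * q := by
          conv_rhs => rw [← divX_mul_X_add q, mul_add, ← C_mul, hw, C_1]
          rw [C_neg]; ring
        have e2 := congrArg (fun r : E[X] =>
          aeval (Ideal.Quotient.mk M u) (r.map (toRb M hEO))) e
        simp only [Polynomial.map_mul, Polynomial.map_sub, map_mul, map_sub, map_X, aeval_X,
          Polynomial.map_one, map_one, hz, mul_zero, sub_zero] at e2
        have := congrArg (· * Ideal.Quotient.mk M u') e2
        simp only [one_mul] at this
        rw [mul_assoc, huu', mul_one] at this
        simpa only [Polynomial.map_mul, map_mul] using this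
  obtain ⟨r, hr⟩ := key _ _ le_rfl hh (pc_HP hE.1 g h p).coeff (by
    rw [mk_aeval M hEO, Ideal.Quotient.eq_zero_iff_mem]
    intro i
    change NU O (𝒜.comp (aeval (u : L) (pc hE.1 g h p)) i)
    rw [pc_aeval hE.1 h p hg]
    rcases 𝒜.comp_homog (𝒜.isHomog_comp (aeval (u : L) p) h) i with e | e <;> rw [e]
    · exact hpM h
    · exact ⟨zero_mem _, fun h => absurd rfl h⟩)
  exact isIntegral_of_inv (by rw [mul_comm]; exact huu') r hr

theorem rstep (hL : 𝒜.IsGradedField) {O l : Subring L} (hO : IsGVRofSubfield 𝒜 ⊤ O)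
    (hl : 𝒜.IsGradedSubfield l) (hlO : l ≤ O) {E F : Subring L} (hE : 𝒜.IsGradedSubfield E) (hEl : E ≤ l)
    (hF : 𝒜.IsGradedSubfield F)
    (hR : RInv 𝒜 (mx hL (isGradedSubfield_top 𝒜) hO) E F) {t : L} (ht : t ∈ l)
    (hth : 𝒜.IsHomog t)
    (htr : ∀ p : E[X], aeval (t : L) p = 0 → p = 0) :
    RInv 𝒜 (mx hL (isGradedSubfield_top 𝒜) hO) (loc hL (adj E t) (adj E t) le_rfl)
      (loc hL (adj F t) (adj F t) le_rfl) := by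
  set M := mx hL (isGradedSubfield_top 𝒜) hO with hM
  set E1 := loc hL (adj E t) (adj E t) le_rfl with hE1
  have hE1l : E1 ≤ l := loc_le hL _ hl (adj_le hEl ht)
  have hE1f : 𝒜.IsGradedSubfield E1 := fr_subfield hL (adj_graded hE.1 hth)
  have hEE1 : E ≤ E1 := (le_adj E t).trans (le_loc hL _)
  obtain ⟨g, hg⟩ := hth
  let t' : O := ⟨t, hlO ht⟩
  have hev : ∀ p0 : O[X], (∀ n, (p0.coeff n : L) ∈ F ∧ 𝒜.IsHomog (p0.coeff n : L)) →
      IsIntegral (rb M E1) (Ideal.Quotient.mk M (eval t' p0)) := by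
    intro p0 hp0
    rw [eval_eq_sum_range, map_sum]
    change _ ∈ icl (rb M E1)
    refine sum_mem fun i _ => ?_
    rw [map_mul, map_pow]
    refine MulMemClass.mul_mem ?_ (pow_mem ?_ _)
    · exact integral_mono_ring (rb_mono hEE1) (hR _ (hp0 i).2 (hp0 i).1)
    · exact integral_of_mem (mem_rb (x := t') (le_loc hL _ (self_mem_adj E t)))
  intro x hxh hxF
  obtain ⟨s, hs, hsh, hs0, hsx⟩ := hxF
  by_cases hx0 : (x : L) = 0
  · rw [show x = 0 from Subtype.ext hx0, map_zero]; exact isIntegral_zero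
  have hah := 𝒜.isHomog_mul hsh hxh
  have ha0 := hL.mul_ne hsh hs0 hx0
  obtain ⟨p, hp, hpe⟩ := adj_homog hF.1 hg hah hsx
  obtain ⟨q, hq, hqe⟩ := adj_homog hF.1 hg hsh hs
  have hp0 : p ≠ 0 := by rintro rfl; apply ha0; rw [← hpe, map_zero]
  have hq0 : q ≠ 0 := by rintro rfl; apply hs0; rw [← hqe, map_zero]
  obtain ⟨y, hy, hyh, hy0, a, haF, huh, hu0, hui, he⟩ :=
    factor hL hO hl hlO hEl hF hR (t := t') ht hg htr hp0 hp
  obtain ⟨z, hz, hzh, hz0, b, hbF, hvh, hv0, hvi, he'⟩ :=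
    factor hL hO hl hlO hEl hF hR (t := t') ht hg htr hq0 hq
  set u := eval t' a with hu
  set v := eval t' b with hv
  let u' : O := ⟨_, hui⟩
  let v' : O := ⟨_, hvi⟩
  have huu : (u : L) * u' = 1 := hL.mul_inv huh hu0
  have hvv : (v : L) * v' = 1 := hL.mul_inv hvh hv0
  have hzz : Ring.inverse z * z = 1 := hL.inv_mul hzh hz0
  have hmain : z * (v : L) * x = y * u := by
    rw [← he', ← he]
    change aeval t q * (x : L) = aeval t p
    rw [hpe, hqe]
  let w : O := x * v * u'
  have hw : (w : L) = y * Ring.inverse z := by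
    change (x : L) * v * u' = _
    calc (x : L) * v * u' = (Ring.inverse z * z) * (x * v * u') := by rw [hzz, one_mul]
      _ = Ring.inverse z * (z * v * x) * u' := by ring
      _ = y * Ring.inverse z * (u * u') := by rw [hmain]; ring
      _ = _ := by rw [huu, mul_one]
  have hx : x = w * u * v' := by
    ext
    change (x : L) = x * v * u' * u * v'
    calc (x : L) = x * (v * v') * (u * u') := by rw [huu, hvv, mul_one, mul_one]
      _ = _ := by ring
  have h1 : IsIntegral (rb M E1) (Ideal.Quotient.mk M w) := by
    refine integral_mono_ring (rb_mono hEE1) (hR _ ?_ ?_) <;> rw [hw]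
    · exact 𝒜.isHomog_mul hyh (hL.inv_homog hzh)
    · exact MulMemClass.mul_mem hy (hF.2 z hz hzh hz0)
  have h2 : IsIntegral (rb M E1) (Ideal.Quotient.mk M v') :=
    res_inv hL hO hE1f (hE1l.trans hlO) hvh (Subtype.ext hvv) (hev b hbF)
  rw [hx, map_mul, map_mul]
  exact (h1.mul (hev a haF)).mul h2

end RStep

end GradedStr


lemma coeff_int_generic {R S : Type*} [CommRing R] [CommRing S] (f : R →+* S) {p : S[X]}
    (q : R[X][X]) (hq : q.Monic) (h : eval₂ (mapRingHom f) p q = 0) (i : ℕ) :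
    f.IsIntegralElem (p.coeff i) := by
  let _ : Algebra R S := f.toAlgebra
  let _ : Algebra R[X] S[X] := Polynomial.algebra R S
  exact IsIntegral.coeff (R := R) (S := S) ⟨q, hq, h⟩ i

namespace GradedStr

section PStep

variable {G : Type u} [CommGroup G] {L : Type v} [CommRing L] {𝒜 : GradedStr G L}

lemma coeff_int {D F : Subring L} (h : D ≤ F) {t : L} (htr : ∀ p : F[X], aeval t p = 0 → p = 0)
    (p : F[X]) (hi : IsIntegral (adj D t) (aeval t p)) (n : ℕ) : IsIntegral D (p.coeff n : L) := by
  obtain ⟨r, hr, hrx⟩ := hi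
  let φ : D[X] →+* adj D t := (aeval t : D[X] →ₐ[D] L).toRingHom.rangeRestrict
  have hφ : Function.Surjective φ := RingHom.rangeRestrict_surjective _
  have hl : r ∈ Polynomial.lifts φ := by
    rw [lifts_iff_coeff_lifts]
    exact fun n => hφ _
  obtain ⟨q, hq, -, hqm⟩ := lifts_and_natDegree_eq_and_monic hl hr
  have hz : eval₂ (mapRingHom (Subring.inclusion h)) p q = 0 := by
    apply htr
    have e := hom_eval₂ q (mapRingHom (Subring.inclusion h)) (aeval t : F[X] →ₐ[F] L).toRingHom p
    refine Eq.trans e ?_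
    rw [← hq, eval₂_map] at hrx
    refine Eq.trans ?_ hrx
    change eval₂ _ (aeval t p) q = _
    congr 1
    ext x
    · simp
      change (x : L) = aeval t (C x : D[X])
      rw [aeval_C]
      rfl
    · simp [φ]
      change _ = aeval t (X : D[X])
      simp
  obtain ⟨s, hs, hsx⟩ := coeff_int_generic (Subring.inclusion h) q hqm hz n
  refine ⟨s, hs, ?_⟩
  have e := hom_eval₂ s (Subring.inclusion h) F.subtype (p.coeff n)
  rw [hsx, map_zero] at e
  exact e.symm

lemma common_denom (hL : 𝒜.IsGradedField) {T S : Subring L} (h : T ≤ S) (s : Finset L)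
    (hs : ∀ x ∈ s, x ∈ loc hL T S h) :
    ∃ u ∈ T, 𝒜.IsHomog u ∧ u ≠ 0 ∧ ∀ x ∈ s, u * x ∈ S := by
  classical
  induction s using Finset.induction_on with
  | empty => exact ⟨1, OneMemClass.one_mem _, 𝒜.isHomog_one, hL.one_ne, by simp⟩
  | insert a s _ ih =>
    obtain ⟨u, hu, huh, hu0, hus⟩ := ih fun x hx => hs x (by simp [hx])
    obtain ⟨v, hv, hvh, hv0, hva⟩ := hs a (by simp)
    refine ⟨u * v, MulMemClass.mul_mem hu hv, 𝒜.isHomog_mul huh hvh, hL.mul_ne huh hu0 hv0, ?_⟩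
    intro x hx
    rcases Finset.mem_insert.mp hx with rfl | hx
    · rw [mul_assoc]; exact MulMemClass.mul_mem (h hu) hva
    · rw [mul_comm u, mul_assoc]; exact MulMemClass.mul_mem (h hv) (hus x hx)

lemma clear_denom (hL : 𝒜.IsGradedField) {T S : Subring L} (h : T ≤ S) {c : L}
    (hc : IsIntegral (loc hL T S h) c) :
    ∃ u ∈ T, 𝒜.IsHomog u ∧ u ≠ 0 ∧ IsIntegral S (u * c) := by
  classical
  obtain ⟨p, hp, hpx⟩ := hc
  have hp : p.Monic := hp
  let P : L[X] := p.map (loc hL T S h).subtype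
  have hPm : P.Monic := hp.map _
  have hPx : eval c P = 0 := by rw [eval_map]; exact hpx
  obtain ⟨u, hu, huh, hu0, hus⟩ := common_denom hL h
    (P.support.image P.coeff) (by
      intro x hx
      obtain ⟨n, -, rfl⟩ := Finset.mem_image.mp hx
      simp only [P, coeff_map]
      exact (p.coeff n).2)
  refine ⟨u, hu, huh, hu0, ?_⟩
  refine integral_of_coeff (P.scaleRoots u) ((monic_scaleRoots_iff u).mpr hPm) ?_ ?_
  · intro i
    apply integral_of_mem
    rw [coeff_scaleRoots]
    by_cases hi0 : P.coeff i = 0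
    · rw [hi0, zero_mul]; exact zero_mem _
    have hle : i ≤ P.natDegree := le_natDegree_of_ne_zero hi0
    rcases hle.lt_or_eq with hlt | he
    · have : P.natDegree - i = (P.natDegree - i - 1) + 1 := by omega
      rw [this, pow_succ', ← mul_assoc, mul_comm (P.coeff i)]
      exact MulMemClass.mul_mem
        (hus _ (Finset.mem_image.mpr ⟨i, mem_support_iff.mpr hi0, rfl⟩)) (pow_mem (h hu) _)
    · rw [he, hPm.coeff_natDegree, Nat.sub_self, pow_zero, mul_one]
      exact OneMemClass.one_mem _
  · have := scaleRoots_eval₂_mul (p := P) (RingHom.id L) c u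
    simp only [RingHom.id_apply, eval₂_id] at this
    rw [this, hPx, mul_zero]

/-- invariant on integrality -/
def PInv (𝒜 : GradedStr G L) {n : ℕ} (A : Fin n → Subring L) (W E F : Subring L) : Prop :=
  ∀ x ∈ F, 𝒜.IsHomog x → (∀ i, IsIntegral (E ⊔ A i : Subring L) x) → IsIntegral W x

/-- `loc (E[t]) (F[t])` is integrally closed in `Frac F[t]` -/
lemma loc_normal (hL : 𝒜.IsGradedField) {E F : Subring L} (hF : 𝒜.IsGradedSubfield F) {t : L}
    (hth : 𝒜.IsHomog t) (hEF : adj E t ≤ adj F t)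
    (htr : ∀ p : F[X], aeval t p = 0 → p = 0) {c : L} (hch : 𝒜.IsHomog c)
    (hcF : c ∈ loc hL (adj F t) (adj F t) le_rfl)
    (hi : IsIntegral (loc hL (adj E t) (adj F t) hEF) c) :
    c ∈ loc hL (adj E t) (adj F t) hEF := by
  set S := loc hL (adj E t) (adj F t) hEF with hS
  obtain ⟨g, hg⟩ := hth
  obtain ⟨j, hj⟩ := hch
  have hSg : 𝒜.IsGradedSubring S := loc_graded hL _ (adj_graded hF.1 ⟨g, hg⟩)
  let J : Ideal F[X] :=
    { carrier := {f | ∀ n : ℕ, aeval t f * c ^ n ∈ S}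
      zero_mem' := by intro n; rw [map_zero, zero_mul]; exact zero_mem _
      add_mem' := by
        intro a b ha hb n
        rw [map_add, add_mul]
        exact add_mem (ha n) (hb n)
      smul_mem' := by
        intro a b hb n
        rw [smul_eq_mul, map_mul, mul_assoc]
        exact MulMemClass.mul_mem (le_loc hL _ ⟨a, rfl⟩) (hb n) }
  have hJh : ∀ p ∈ J, ∀ h, pc hF.1 g h p ∈ J := by
    intro p hp h n
    rw [pc_aeval hF.1 h p hg, mul_comm, ← 𝒜.comp_mul_left (𝒜.pow_mem' hj n), mul_comm (c ^ n)]
    exact hSg _ (hp n) _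
  obtain ⟨q0, hq0, hqh, hqne, hqc⟩ := hcF
  have hJne : ∃ p ∈ J, p ≠ 0 := by
    obtain ⟨q, rfl⟩ := hq0
    change 𝒜.IsHomog (aeval t q) at hqh
    change aeval t q ≠ 0 at hqne
    change aeval t q * c ∈ _ at hqc
    obtain ⟨r, hr, hrx⟩ := hi
    have hr : r.Monic := hr
    set N := r.natDegree with hN
    refine ⟨q ^ N, ?_, ?_⟩
    · intro n
      rw [map_pow]
      induction n using Nat.strong_induction_on with
      | _ n ih =>
        rcases le_or_gt n N with hn | hn
        · have e : aeval t q ^ N * c ^ n = aeval t q ^ (N - n) * (aeval t q * c) ^ n := by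
            rw [mul_pow, ← mul_assoc, ← pow_add, Nat.sub_add_cancel hn]
          rw [e]
          have hqm : aeval t q ∈ adj F t := ⟨q, rfl⟩
          exact le_loc hL _ (MulMemClass.mul_mem (pow_mem hqm _) (pow_mem hqc _))
        · have hrx' : aeval c r = 0 := hrx
          rw [aeval_eq_sum_range, Finset.sum_range_succ, hr.coeff_natDegree, one_smul] at hrx'
          have h2 := eq_neg_of_add_eq_zero_right hrx'
          have e : aeval t q ^ N * c ^ n =
              - ∑ i ∈ Finset.range N, (r.coeff i : L) * (aeval t q ^ N * c ^ (n - N + i)) := by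
            have : c ^ n = c ^ (n - N) * c ^ N := by rw [← pow_add, Nat.sub_add_cancel hn.le]
            rw [this, h2, mul_neg, mul_neg, Finset.mul_sum, Finset.mul_sum]
            congr 1
            refine Finset.sum_congr rfl fun i _ => ?_
            rw [Algebra.smul_def, pow_add]
            change _ * (_ * ((r.coeff i : L) * _)) = _
            ring
          rw [e]
          refine neg_mem (sum_mem fun i hi => MulMemClass.mul_mem (r.coeff i).2 (ih _ ?_))
          have := Finset.mem_range.mp hi
          omega
    · intro h0
      apply hL.pow_ne hqh hqne N
      rw [← map_pow, h0, map_zero]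
  obtain ⟨d, hdJ, hdm, hdH, hdd⟩ := principal hL hF g J hJh hJne
  have hd1 := hdJ 1
  rw [pow_one] at hd1
  obtain ⟨h, hhT, hhh, hh0, hhm⟩ := hd1
  obtain ⟨f, hf⟩ := hhm
  have hf : aeval t f = h * (aeval t d * c) := hf
  have hfJ : f ∈ J := by
    intro n
    have e : aeval t f * c ^ n = h * (aeval t d * c ^ (n + 1)) := by
      rw [hf, pow_succ]; ring
    rw [e]
    exact MulMemClass.mul_mem (le_loc hL _ (hEF hhT)) (hdJ (n + 1))
  obtain ⟨f', rfl⟩ := hdd f hfJ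
  have hd0 : aeval t d ≠ 0 := by
    intro h0
    rw [htr d h0] at hdm
    have h10 := congrArg Subtype.val hdm.leadingCoeff
    simp only [leadingCoeff_zero] at h10
    exact hL.one_ne h10.symm
  refine ⟨h, hhT, hhh, hh0, f', ?_⟩
  change aeval t f' = h * c
  apply (hL.2 _ (hdH.aeval hg) hd0).mul_left_cancel
  rw [← map_mul, hf]; ring

theorem pstep (hL : 𝒜.IsGradedField) {n : ℕ} {A : Fin n → Subring L} (hn : 0 < n)
    {l W E F : Subring L} (hl : 𝒜.IsGradedSubfield l) (hlW : l ≤ W)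
    (hEl : E ≤ l) (hF : 𝒜.IsGradedSubfield F) (hEF : E ≤ F)
    (hAF : ∀ i, A i ≤ F) (hP : PInv 𝒜 A W E F) {t : L} (ht : t ∈ l) (hth : 𝒜.IsHomog t)
    (htr : ∀ p : F[X], aeval t p = 0 → p = 0) :
    PInv 𝒜 A W (loc hL (adj E t) (adj E t) le_rfl) (loc hL (adj F t) (adj F t) le_rfl) := by
  classical
  intro c hcF hch hci
  have hmono : ∀ {D D' : Subring L}, D ≤ D' → adj D t ≤ adj D' t := fun h =>
    adj_le (h.trans (le_adj _ t)) (self_mem_adj _ t)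
  have hcS : c ∈ loc hL (adj E t) (adj F t) (hmono hEF) := by
    refine loc_normal hL hF hth _ htr hch hcF (integral_mono_ring ?_ (hci ⟨0, hn⟩))
    refine sup_le (loc_mono hL _ _ le_rfl (hmono hEF)) ?_
    exact ((hAF _).trans (le_adj F t)).trans (le_loc hL _)
  obtain ⟨u0, hu0, hu0h, hu00, hu0c⟩ := hcS
  have hD : ∀ i, ∃ u ∈ adj E t, 𝒜.IsHomog u ∧ u ≠ 0 ∧
      IsIntegral (adj (E ⊔ A i) t) (u * c) := by
    intro i
    refine clear_denom hL (hmono le_sup_left) (integral_mono_ring ?_ (hci i))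
    refine sup_le (loc_mono hL _ _ le_rfl (hmono le_sup_left)) ?_
    exact (le_sup_right.trans (le_adj _ t)).trans (le_loc hL _)
  choose v hv hvh hv0 hvi using hD
  have hprod : ∀ s : Finset (Fin n), ∏ i ∈ s, v i ∈ adj E t ∧ 𝒜.IsHomog (∏ i ∈ s, v i) ∧
      ∏ i ∈ s, v i ≠ 0 := by
    intro s
    induction s using Finset.induction_on with
    | empty =>
      rw [Finset.prod_empty]
      exact ⟨OneMemClass.one_mem _, 𝒜.isHomog_one, hL.one_ne⟩
    | insert a s ha ih =>
      rw [Finset.prod_insert ha]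
      exact ⟨MulMemClass.mul_mem (hv a) ih.1, 𝒜.isHomog_mul (hvh a) ih.2.1,
        hL.mul_ne (hvh a) (hv0 a) ih.2.2⟩
  obtain ⟨hw, hwh, hw0⟩ := hprod Finset.univ
  set w := ∏ i, v i with hwdef
  set u := w * u0 with hu
  have huh : 𝒜.IsHomog u := 𝒜.isHomog_mul hwh hu0h
  have hune : u ≠ 0 := hL.mul_ne hwh hw0 hu00
  have huE : u ∈ adj E t := MulMemClass.mul_mem hw hu0
  have hucF : u * c ∈ adj F t := by
    rw [hu, mul_assoc]
    exact MulMemClass.mul_mem (hmono hEF hw) hu0c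
  have huci : ∀ i, IsIntegral (adj (E ⊔ A i) t) (u * c) := by
    intro i
    have e : u * c = ((∏ j ∈ Finset.univ.erase i, v j) * u0) * (v i * c) := by
      rw [hu, hwdef, ← Finset.prod_erase_mul _ _ (Finset.mem_univ i)]; ring
    rw [e]
    refine IsIntegral.mul (integral_of_mem ?_) (hvi i)
    exact hmono le_sup_left (MulMemClass.mul_mem (hprod _).1 hu0)
  obtain ⟨g, hg⟩ := hth
  obtain ⟨p, hp, hpe⟩ := adj_homog hF.1 hg (𝒜.isHomog_mul huh hch) hucF
  have hcoef : ∀ m, IsIntegral W (p.coeff m : L) := by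
    intro m
    refine hP _ (p.coeff m).2 (hp.coeff m) fun i => ?_
    refine coeff_int (sup_le hEF (hAF i)) htr p ?_ m
    rw [hpe]; exact huci i
  have huc : IsIntegral W (u * c) := by
    rw [← hpe, aeval_eq_sum_range]
    change _ ∈ icl W
    refine sum_mem fun i _ => ?_
    rw [Algebra.smul_def]
    exact MulMemClass.mul_mem (hcoef i) (pow_mem (integral_of_mem (hlW ht)) _)
  have e : c = Ring.inverse u * (u * c) := by
    rw [← mul_assoc, hL.inv_mul huh hune, one_mul]
  rw [e]
  refine IsIntegral.mul (integral_of_mem (hlW (hl.2 u ?_ huh hune))) huc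
  exact adj_le hEl ht huE

end PStep

end GradedStr


section FiniteType

variable {R : Type*} [CommRing R]

lemma fin_closure {T : Set R} {x : R} (hx : x ∈ Subring.closure T) :
    ∃ s : Finset R, ↑s ⊆ T ∧ x ∈ Subring.closure (s : Set R) := by
  classical
  induction hx using Subring.closure_induction with
  | mem x hx => exact ⟨{x}, by simpa using hx, Subring.subset_closure (by simp)⟩
  | zero => exact ⟨∅, by simp, zero_mem _⟩
  | one => exact ⟨∅, by simp, one_mem _⟩
  | add x y _ _ hx hy =>
    obtain ⟨s, hs, hxs⟩ := hx
    obtain ⟨t, ht, hyt⟩ := hy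
    refine ⟨s ∪ t, by simpa using ⟨hs, ht⟩, add_mem ?_ ?_⟩
    · exact Subring.closure_mono (by simp) hxs
    · exact Subring.closure_mono (by simp) hyt
  | neg x _ hx =>
    obtain ⟨s, hs, hxs⟩ := hx
    exact ⟨s, hs, neg_mem hxs⟩
  | mul x y _ _ hx hy =>
    obtain ⟨s, hs, hxs⟩ := hx
    obtain ⟨t, ht, hyt⟩ := hy
    refine ⟨s ∪ t, by simpa using ⟨hs, ht⟩, mul_mem ?_ ?_⟩
    · exact Subring.closure_mono (by simp) hxs
    · exact Subring.closure_mono (by simp) hyt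

lemma fin_integral {T : Set R} {x : R} (hx : IsIntegral (Subring.closure T) x) :
    ∃ s : Finset R, ↑s ⊆ T ∧ IsIntegral (Subring.closure (s : Set R)) x := by
  classical
  obtain ⟨p, hp, hpx⟩ := hx
  choose s hsT hs using fun n => fin_closure (p.coeff n).2
  refine ⟨p.support.biUnion s, ?_, ?_⟩
  · intro y hy
    obtain ⟨n, -, hn⟩ := Finset.mem_biUnion.mp hy
    exact hsT n hn
  · refine integral_of_coeff (p.map (Subring.closure T).subtype) (hp.map _) ?_ ?_
    · intro i
      rw [coeff_map]
      by_cases hi : p.coeff i = 0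
      · rw [hi, map_zero]; exact isIntegral_zero
      · refine integral_of_mem (Subring.closure_mono ?_ (hs i))
        intro y hy
        exact Finset.mem_biUnion.mpr ⟨i, mem_support_iff.mpr hi, hy⟩
    · rw [eval_map]; exact hpx

end FiniteType

namespace GradedStr

section Final

variable {G : Type u} [CommGroup G] {L : Type v} [CommRing L] {𝒜 : GradedStr G L}

/-- either algebraic, hence integral, or transcendental -/
lemma dichotomy (hL : 𝒜.IsGradedField) {E : Subring L} (hE : 𝒜.IsGradedSubfield E) {z : L}
    (hz : 𝒜.IsHomog z) (hi : ¬ IsIntegral E z) (p : E[X]) (hp : aeval z p = 0) : p = 0 := by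
  by_contra h0
  obtain ⟨g, hg⟩ := hz
  obtain ⟨h, hh⟩ := exists_pc_ne hE.1 g h0
  obtain ⟨u, -, hmon⟩ := exists_monic hL hE hh ((pc_HP hE.1 g h p).coeff _)
  refine hi ⟨_, hmon, ?_⟩
  rw [← aeval_def, map_mul, pc_aeval hE.1 h p hg, hp, comp_zero', mul_zero]

/-- good pairs -/
structure Good (hL : 𝒜.IsGradedField) {O : Subring L} (hO : IsGVRofSubfield 𝒜 ⊤ O) {n : ℕ}
    (A : Fin n → Subring L) (K l W E F : Subring L) : Prop where
  hE : 𝒜.IsGradedSubfield E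
  hF : 𝒜.IsGradedSubfield F
  hEl : E ≤ l
  hEF : E ≤ F
  hKF : K ≤ F
  hR : RInv 𝒜 (mx hL (isGradedSubfield_top 𝒜) hO) E F
  hP : PInv 𝒜 A W E F

lemma exists_good (hL : 𝒜.IsGradedField) {O : Subring L} (hO : IsGVRofSubfield 𝒜 ⊤ O) {n : ℕ}
    (hn : 0 < n) {A : Fin n → Subring L} {K l W E F : Subring L} (hl : 𝒜.IsGradedSubfield l)
    (hlO : l ≤ O) (hlW : l ≤ W) (hAK : ∀ i, A i ≤ K)
    (h0 : Good hL hO A K l W E F) (s : Finset L) (hs : ∀ z ∈ s, z ∈ l ∧ 𝒜.IsHomog z) :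
    ∃ E F, Good hL hO A K l W E F ∧ ∀ z ∈ s, IsIntegral E z := by
  classical
  induction s using Finset.induction_on with
  | empty => exact ⟨E, F, h0, by simp⟩
  | insert t s _ ih =>
    obtain ⟨E, F, h, hi⟩ := ih fun z hz => hs z (by simp [hz])
    obtain ⟨ht, hth⟩ := hs t (by simp)
    by_cases hti : IsIntegral E t
    · refine ⟨E, F, h, fun z hz => ?_⟩
      rcases Finset.mem_insert.mp hz with rfl | hz
      · exact hti
      · exact hi z hz
    · have htr := dichotomy hL h.hE hth hti
      obtain ⟨g, hg⟩ := hth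
      have htrF := transc hL hO hl hlO h.hEl h.hF h.hR ht hg htr
      have hEE : E ≤ loc hL (adj E t) (adj E t) le_rfl := (le_adj E t).trans (le_loc hL _)
      have hFF : F ≤ loc hL (adj F t) (adj F t) le_rfl := (le_adj F t).trans (le_loc hL _)
      have hadj : adj E t ≤ adj F t := adj_le (h.hEF.trans (le_adj _ t)) (self_mem_adj _ t)
      refine ⟨loc hL (adj E t) (adj E t) le_rfl, loc hL (adj F t) (adj F t) le_rfl,
        ⟨fr_subfield hL (adj_graded h.hE.1 ⟨g, hg⟩), fr_subfield hL (adj_graded h.hF.1 ⟨g, hg⟩),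
          loc_le hL _ hl (adj_le h.hEl ht), loc_mono hL _ _ hadj hadj, h.hKF.trans hFF,
          rstep hL hO hl hlO h.hE h.hEl h.hF h.hR ht ⟨g, hg⟩ htr,
          pstep hL hn hl hlW h.hEl h.hF h.hEF (fun i => (hAK i).trans h.hKF) h.hP ht ⟨g, hg⟩ htrF⟩,
        fun z hz => ?_⟩
      rcases Finset.mem_insert.mp hz with rfl | hz
      · exact integral_of_mem (le_loc hL _ (self_mem_adj E z))
      · exact integral_mono_ring hEE (hi z hz)

lemma good_integral (hL : 𝒜.IsGradedField) {O : Subring L} (hO : IsGVRofSubfield 𝒜 ⊤ O) {n : ℕ}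
    (hn : 0 < n) {A : Fin n → Subring L} {K l W E F : Subring L} (hAK : ∀ i, A i ≤ K)
    (h : Good hL hO A K l W E F) {b : L} (hb : 𝒜.IsHomog b)
    (hi : ∀ i, IsIntegral (E ⊔ A i : Subring L) b) : IsIntegral W b := by
  obtain ⟨g, hg⟩ := hb
  have hDF : ∀ i, E ⊔ A i ≤ F := fun i => sup_le h.hEF ((hAK i).trans h.hKF)
  let I : Ideal F[X] := RingHom.ker (aeval b : F[X] →ₐ[F] L)
  have hp : ∀ i, ∃ p : (E ⊔ A i : Subring L)[X], p.Monic ∧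
      p.map (Subring.inclusion (hDF i)) ∈ I := by
    intro i
    obtain ⟨p, hp, hpx⟩ := hi i
    refine ⟨p, hp, ?_⟩
    change aeval b _ = 0
    rw [aeval_def, eval₂_map]
    exact hpx
  have hne : ∃ p ∈ I, p ≠ 0 := by
    obtain ⟨p, hp, hpI⟩ := hp ⟨0, hn⟩
    refine ⟨_, hpI, fun h0 => ?_⟩
    have hm := hp.map (Subring.inclusion (hDF ⟨0, hn⟩))
    rw [h0] at hm
    have h10 := congrArg Subtype.val hm.leadingCoeff
    simp only [leadingCoeff_zero] at h10
    exact hL.one_ne h10.symm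
  obtain ⟨q, hqI, hqm, hqH, hqd⟩ := principal hL h.hF g I (by
    intro p hp i
    have hp' : aeval b p = 0 := hp
    change aeval b _ = 0
    rw [pc_aeval h.hF.1 i p hg, hp', comp_zero']) hne
  refine integral_of_coeff (q.map F.subtype) (hqm.map _) ?_ ?_
  · intro m
    rw [coeff_map]
    refine h.hP _ (q.coeff m).2 (hqH.coeff m) fun i => ?_
    obtain ⟨p, hp, hpI⟩ := hp i
    have hd := Polynomial.map_dvd F.subtype (hqd _ hpI)
    rw [Polynomial.map_map] at hd
    have := Polynomial.isIntegral_coeff_of_dvd p (q.map F.subtype) hp (hqm.map _) hd m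
    rwa [coeff_map] at this
  · rw [eval_map]
    exact hqI

theorem main_claim (hL : 𝒜.IsGradedField) {O : Subring L} (hO : IsGVRofSubfield 𝒜 ⊤ O) {n : ℕ}
    (hn : 0 < n) {A : Fin n → Subring L} {K l W E F : Subring L} (hl : 𝒜.IsGradedSubfield l)
    (hlO : l ≤ O) (hlW : l ≤ W) (hAK : ∀ i, A i ≤ K)
    (h0 : Good hL hO A K l W E F) {b : L} (hb : 𝒜.IsHomog b)
    (hi : ∀ i, IsIntegral (l ⊔ A i : Subring L) b) : IsIntegral W b := by
  classical
  have hfin : ∀ i, ∃ s : Finset L, ↑s ⊆ ({z | z ∈ l ∧ 𝒜.IsHomog z} ∪ (A i : Set L)) ∧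
      IsIntegral (Subring.closure (s : Set L)) b := by
    intro i
    refine fin_integral (integral_mono_ring (sup_le ?_ ?_) (hi i))
    · exact hl.1.le_of_homog fun z hz hzh => Subring.subset_closure (Or.inl ⟨hz, hzh⟩)
    · exact fun z hz => Subring.subset_closure (Or.inr hz)
  choose s hsub hsi using hfin
  obtain ⟨E, F, h, hint⟩ := exists_good hL hO hn hl hlO hlW hAK h0
    ((Finset.univ.biUnion s).filter fun z => z ∈ l ∧ 𝒜.IsHomog z) (by
      intro z hz
      exact (Finset.mem_filter.mp hz).2)
  refine good_integral hL hO hn hAK h hb fun i => ?_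
  refine integral_trans_ring ?_ (hsi i)
  have : Subring.closure (s i : Set L) ≤ icl (E ⊔ A i) := by
    rw [Subring.closure_le]
    intro z hz
    rcases hsub i hz with hz' | hz'
    · refine integral_mono_ring le_sup_left (hint z ?_)
      rw [Finset.mem_filter]
      exact ⟨Finset.mem_biUnion.mpr ⟨i, Finset.mem_univ _, hz⟩, hz'⟩
    · exact integral_of_mem ((le_sup_right : A i ≤ E ⊔ A i) hz')
  exact this

lemma mx_mono (hL : 𝒜.IsGradedField) {K O O' : Subring L} (hK : 𝒜.IsGradedSubfield K)
    (hO' : IsGVRofSubfield 𝒜 K O') (hO : IsGVRofSubfield 𝒜 ⊤ O) (hOK : O ⊓ K = O')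
    {x : L} (hx' : x ∈ O') (hx : x ∈ O) (hm : (⟨x, hx'⟩ : O') ∈ mx hL hK hO') :
    (⟨x, hx⟩ : O) ∈ mx hL (isGradedSubfield_top 𝒜) hO := by
  intro g
  have h := hm g
  change NU O' (𝒜.comp x g) at h
  change NU O (𝒜.comp x g)
  refine ⟨hO.2.1 _ hx g, fun h0 hi => h.2 h0 ?_⟩
  rw [← hOK]
  exact ⟨hi, hK.2 _ (hO'.1 h.1) (𝒜.isHomog_comp _ _) h0⟩

end Final

end GradedStr

/-- **descent of affineness for graded birational spaces.**
Let `L` be a `G`-graded field with graded subfields `k ⊆ K ⊆ L` and `k ⊆ l ⊆ L`, and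
suppose the restriction map `ψ : P_{L/l} → P_{K/k}`, `O ↦ O ∩ K`, is surjective.  Let
`X ⊆ P_{K/k}` be a finite union of affine subsets `P_{K/k}{A_i}` with each `A_i` a
finitely generated graded `k`-subalgebra of `K`.  If the preimage `ψ⁻¹(X)` is affine,
`ψ⁻¹(X) = P_{L/l}{B}` for a finitely generated graded `l`-subalgebra `B` of `L`, then
`X` itself is affine: `X = P_{K/k}{A}` for some finitely generated graded
`k`-subalgebra `A` of `K`. -/
theorem affineness_descends
    {G : Type u} [CommGroup G] {L : Type v} [CommRing L]
    (𝒜 : GradedStr G L) (hL : 𝒜.IsGradedField)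
    (k K l : Subring L)
    (hk : 𝒜.IsGradedSubfield k) (hK : 𝒜.IsGradedSubfield K)
    (hl : 𝒜.IsGradedSubfield l) (hkK : k ≤ K) (hkl : k ≤ l)
    (hsurj : ∀ O' : Subring L, IsGVRofSubfield 𝒜 K O' → k ≤ O' →
      ∃ O : Subring L, (IsGVRofSubfield 𝒜 ⊤ O ∧ l ≤ O) ∧ O ⊓ K = O')
    (n : ℕ) (A : Fin n → Subring L)
    (hA : ∀ i, k ≤ A i ∧ A i ≤ K ∧ 𝒜.IsGradedSubring (A i) ∧
      ∃ s : Finset L, (∀ a ∈ s, 𝒜.IsHomog a) ∧ A i = Subring.closure (↑k ∪ ↑s))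
    (B : Subring L)
    (hB : l ≤ B ∧ 𝒜.IsGradedSubring B ∧
      ∃ s : Finset L, (∀ a ∈ s, 𝒜.IsHomog a) ∧ B = Subring.closure (↑l ∪ ↑s))
    (hpre : ∀ O : Subring L, IsGVRofSubfield 𝒜 ⊤ O → l ≤ O →
      ((∃ i, A i ≤ O ⊓ K) ↔ B ≤ O)) :
    ∃ A' : Subring L, k ≤ A' ∧ A' ≤ K ∧ 𝒜.IsGradedSubring A' ∧
      (∃ s : Finset L, (∀ a ∈ s, 𝒜.IsHomog a) ∧ A' = Subring.closure (↑k ∪ ↑s)) ∧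
      ∀ O' : Subring L, IsGVRofSubfield 𝒜 K O' → k ≤ O' →
        ((∃ i, A i ≤ O') ↔ A' ≤ O') := by
  classical
  obtain ⟨i0, -⟩ : ∃ i, A i ≤ ⊤ ⊓ K :=
    (hpre ⊤ ⟨le_rfl, (GradedStr.isGradedSubfield_top 𝒜).1, fun _ _ _ _ => Or.inl trivial⟩ le_top).mpr le_top
  have hn : 0 < n := i0.pos
  have hAK : ∀ i, A i ≤ K := fun i => (hA i).2.1
  obtain ⟨hlB, hBg, sB, hsB, hBeq⟩ := hB
  let T : Set L := {x | x ∈ K ∧ 𝒜.IsHomog x ∧ ∀ i, IsIntegral (A i) x}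
  let W : Subring L := Subring.closure (↑l ∪ T)
  have hlW : l ≤ W := fun x hx => Subring.subset_closure (Or.inl hx)
  obtain ⟨O', hO', hkO', hres⟩ := GradedStr.exists_resalg hL hk hK hkK
  obtain ⟨O, ⟨hO, hlO⟩, hOK⟩ := hsurj O' hO' hkO'
  have hO'O : O' ≤ O := hOK ▸ inf_le_left
  have hgood : GradedStr.Good hL hO A K l W k K := by
    refine ⟨hk, hK, hkl, hkK, le_rfl, ?_, ?_⟩
    · intro x hxh hxK
      have hx' : (x : L) ∈ O' := by rw [← hOK]; exact ⟨x.2, hxK⟩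
      obtain ⟨p, hp, hpM⟩ := (GradedStr.rb_integral_iff _ hkO' ⟨x, hx'⟩).mp (hres ⟨x, hx'⟩ hxh)
      rw [GradedStr.rb_integral_iff _ (hkl.trans hlO)]
      exact ⟨p, hp, GradedStr.mx_mono hL hK hO' hO hOK _ _ hpM⟩
    · intro x hxK hxh hxi
      refine integral_of_mem (Subring.subset_closure (Or.inr ⟨hxK, hxh, fun i => ?_⟩))
      exact integral_mono_ring (sup_le (hA i).1 le_rfl) (hxi i)
  have hbW : ∀ b ∈ sB, IsIntegral W b := by
    intro b hb
    refine GradedStr.main_claim hL hO hn hl hlO hlW hAK hgood (hsB b hb) fun i => ?_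
    refine GradedStr.integral_of_forall hL (GradedStr.graded_sup hl.1 (hA i).2.2.1) (hsB b hb) ?_
    intro Q hQ hDQ
    have hBQ := (hpre Q hQ (le_sup_left.trans hDQ)).mp
      ⟨i, le_inf (le_sup_right.trans hDQ) (hAK i)⟩
    apply hBQ
    rw [hBeq]
    exact Subring.subset_closure (Or.inr hb)
  have hfin : ∀ b : L, ∃ s : Finset L, ↑s ⊆ (↑l ∪ T) ∧
      (b ∈ sB → IsIntegral (Subring.closure (s : Set L)) b) := by
    intro b
    by_cases hb : b ∈ sB
    · obtain ⟨s, h1, h2⟩ := fin_integral (hbW b hb)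
      exact ⟨s, h1, fun _ => h2⟩
    · exact ⟨∅, by simp, fun h => absurd h hb⟩
  choose s hsT hsi using hfin
  let S : Finset L := (sB.biUnion s).filter (· ∈ T)
  have hST : ∀ x ∈ S, x ∈ T := fun x hx => (Finset.mem_filter.mp hx).2
  refine ⟨Subring.closure (↑k ∪ ↑S), fun x hx => Subring.subset_closure (Or.inl hx), ?_,
    GradedStr.graded_closure_union hk.1 fun x hx => (hST x hx).2.1,
    ⟨S, fun x hx => (hST x hx).2.1, rfl⟩, ?_⟩
  · rw [Subring.closure_le]
    rintro x (hx | hx)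
    · exact hkK hx
    · exact (hST x hx).1
  intro Q' hQ' hkQ'
  constructor
  · rintro ⟨i, hi⟩
    rw [Subring.closure_le]
    rintro x (hx | hx)
    · exact hkQ' hx
    · obtain ⟨h1, h2, h3⟩ := hST x hx
      exact GradedStr.gvr_integral hL hQ' h1 h2 (integral_mono_ring hi (h3 i))
  · intro hle
    obtain ⟨Q, ⟨hQ, hlQ⟩, hQK⟩ := hsurj Q' hQ' hkQ'
    have hQ'Q : Q' ≤ Q := hQK ▸ inf_le_left
    have hBQ : B ≤ Q := by
      rw [hBeq, Subring.closure_le]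
      rintro b (hb | hb)
      · exact hlQ hb
      · refine GradedStr.gvr_integral hL hQ (F := ⊤) trivial (hsB b hb)
          (integral_mono_ring ?_ (hsi b hb))
        rw [Subring.closure_le]
        intro z hz
        rcases hsT b hz with hz' | hz'
        · exact hlQ hz'
        · apply hQ'Q
          apply hle
          refine Subring.subset_closure (Or.inr ?_)
          exact Finset.mem_filter.mpr ⟨Finset.mem_biUnion.mpr ⟨b, hb, hz⟩, hz'⟩
    obtain ⟨i, hi⟩ := (hpre Q hQ hlQ).mpr hBQ
    exact ⟨i, hQK ▸ hi⟩
end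

section
/- Let k be a field, let S and S' be irreducible and reduced schemes of finite type over k, and let π : S' → S be a proper surjective k-morphism. Then the normalization of S' admits a proper k-morphism to an affine k-scheme of finite type if and only if the normalization of S does. In particular (taking S, S' already normal): if π : S' → S is a proper surjective k-morphism between normal integral schemes of finite type over k, then S' is proper over an affine algebraic k-scheme if and only if S is. -/
open AlgebraicGeometry CategoryTheory

noncomputable section

/-- `ν : T ⟶ S` is the normalization of the integral scheme `S`: `T` is an integral
scheme that is normal (all its local rings are integrally closed domains), `ν` is an
integral morphism (affine and universally closed), and `ν` is birational (it sends
the generic point to the generic point and induces an isomorphism on stalks there). -/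
def IsNormalization {T S : Scheme}
    [AlgebraicGeometry.IsIntegral T] [AlgebraicGeometry.IsIntegral S]
    (ν : T ⟶ S) : Prop :=
  (∀ x : T.carrier, IsIntegrallyClosed (T.presheaf.stalk x)) ∧
    IsAffineHom ν ∧ UniversallyClosed ν ∧
    ν.base (genericPoint T) = genericPoint S ∧
    IsIso (ν.stalkMap (genericPoint T))


namespace Semiaff
open IntermediateField IntermediateField.algebraAdjoinAdjoin

lemma root_mem {k Ω : Type*} [Field k] [Field Ω] [Algebra k Ω] {ι : Type*} (x : ι → Ω)
    (σ : Ω ≃+* Ω) {z : Ω} (hz : z ∈ adjoin k (Set.range x)) :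
    ∃ T : Set k, T.Finite ∧
      σ z ∈ adjoin k ((fun c => σ (algebraMap k Ω c)) '' T ∪ Set.range (fun i => σ (x i))) := by
  induction hz using IntermediateField.adjoin_induction with
  | mem z hz =>
    obtain ⟨i, rfl⟩ := hz
    exact ⟨∅, Set.finite_empty, subset_adjoin _ _ (Or.inr ⟨i, rfl⟩)⟩
  | algebraMap c =>
    exact ⟨{c}, Set.finite_singleton _, subset_adjoin _ _ (Or.inl ⟨c, rfl, rfl⟩)⟩
  | add a b _ _ ha hb =>
    obtain ⟨T, hT, ha⟩ := ha
    obtain ⟨T', hT', hb⟩ := hb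
    refine ⟨T ∪ T', hT.union hT', ?_⟩
    rw [map_add]
    refine add_mem (adjoin.mono _ _ _ ?_ ha) (adjoin.mono _ _ _ ?_ hb) <;>
      gcongr <;> simp
  | inv a _ ha =>
    obtain ⟨T, hT, ha⟩ := ha
    exact ⟨T, hT, by rw [map_inv₀]; exact inv_mem ha⟩
  | mul a b _ _ ha hb =>
    obtain ⟨T, hT, ha⟩ := ha
    obtain ⟨T', hT', hb⟩ := hb
    refine ⟨T ∪ T', hT.union hT', ?_⟩
    rw [map_mul]
    refine mul_mem (adjoin.mono _ _ _ ?_ ha) (adjoin.mono _ _ _ ?_ hb) <;>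
      gcongr <;> simp

lemma roots_mem {k Ω : Type*} [Field k] [Field Ω] [Algebra k Ω] {ι : Type*} (x : ι → Ω)
    (σ : Ω ≃+* Ω) {W : Set Ω} (hW : W.Finite)
    (h : ∀ w ∈ W, σ.symm w ∈ adjoin k (Set.range x)) :
    ∃ T : Set k, T.Finite ∧
      W ⊆ adjoin k ((fun c => σ (algebraMap k Ω c)) '' T ∪ Set.range (fun i => σ (x i))) := by
  induction W, hW using Set.Finite.induction_on with
  | empty => exact ⟨∅, Set.finite_empty, by simp⟩
  | @insert a s _ _ ih =>
    obtain ⟨T, hT, hs⟩ := ih fun w hw => h w (Or.inr hw)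
    obtain ⟨T', hT', ha⟩ := root_mem x σ (h a (Or.inl rfl))
    rw [RingEquiv.apply_symm_apply] at ha
    refine ⟨T ∪ T', hT.union hT', ?_⟩
    rintro w (rfl | hw)
    · refine (adjoin.mono _ _ _ ?_ ha)
      gcongr; simp
    · refine (adjoin.mono _ _ _ ?_ (hs hw))
      gcongr; simp

lemma common_pow {F Ω : Type*} [Field F] [Field Ω] [Algebra F Ω] (p : ℕ) [ExpChar F p]
    {W : Set Ω} (hW : W.Finite) (h : ∀ w ∈ W, w ∈ perfectClosure F Ω) :
    ∃ n, ∀ w ∈ W, w ^ p ^ n ∈ (algebraMap F Ω).range := by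
  induction W, hW using Set.Finite.induction_on with
  | empty => exact ⟨0, by simp⟩
  | @insert a s _ _ ih =>
    obtain ⟨n, hs⟩ := ih fun w hw => h w (Or.inr hw)
    obtain ⟨m, ha⟩ := (mem_perfectClosure_iff_pow_mem p).1 (h a (Or.inl rfl))
    refine ⟨n + m, ?_⟩
    rintro w (rfl | hw)
    · rw [add_comm, pow_add, pow_mul]; exact pow_mem ha _
    · rw [pow_add, pow_mul]; exact pow_mem (hs w hw) _

lemma sep_of_coeff {M F Ω : Type*} [Field M] [Field F] [Field Ω] [Algebra M Ω] [Algebra F Ω]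
    (m : Polynomial M) (hm : m.Separable) (a : Ω) (ha : Polynomial.aeval a m = 0)
    (hc : ∀ n, algebraMap M Ω (m.coeff n) ∈ Set.range (algebraMap F Ω)) :
    IsSeparable F a := by
  have : m.map (algebraMap M Ω) ∈ Polynomial.lifts (algebraMap F Ω) := by
    rw [Polynomial.lifts_iff_coeff_lifts]; simpa using hc
  obtain ⟨m', hm'⟩ := this
  have hm' : m'.map (algebraMap F Ω) = m.map (algebraMap M Ω) := hm'
  have h1 : m'.Separable := by
    rw [← Polynomial.separable_map (algebraMap F Ω), hm']
    exact hm.map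
  have h2 : Polynomial.aeval a m' = 0 := by
    rw [Polynomial.aeval_def, ← Polynomial.eval_map, hm', Polynomial.eval_map,
      ← Polynomial.aeval_def, ha]
  exact h1.of_dvd (minpoly.dvd F a h2)

lemma finite_sep (P F : Type*) {Ω : Type*} [CommRing P] [IsDomain P] [Field F] [Field Ω]
    [Algebra P F] [IsFractionRing P F] [Algebra P Ω] [Algebra F Ω] [IsScalarTower P F Ω]
    [IsIntegrallyClosed P] [IsNoetherianRing P] (a : Set Ω) (hfin : a.Finite)
    (hsep : ∀ z ∈ a, IsSeparable F z) :
    ∃ D : Submodule P Ω, D.FG ∧ ∀ z ∈ adjoin F a, IsIntegral P z → z ∈ D := by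
  let L := adjoin F a
  have : Finite a := hfin
  have : FiniteDimensional F L := finiteDimensional_adjoin fun z hz => (hsep z hz).isIntegral
  have : Algebra.IsSeparable F L := (isSeparable_adjoin_iff_isSeparable F Ω).2 hsep
  have hfinite : Module.Finite P (integralClosure P L) :=
    IsIntegralClosure.finite P F L (integralClosure P L)
  let φ : L →ₐ[P] Ω := L.val.restrictScalars P
  let ψ : integralClosure P L →ₗ[P] Ω := (φ.comp (integralClosure P L).val).toLinearMap
  refine ⟨LinearMap.range ψ, ?_, ?_⟩
  · exact Submodule.fg_range ψ
  · intro z hz hzi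
    refine ⟨⟨⟨z, hz⟩, ?_⟩, rfl⟩
    exact (isIntegral_algHom_iff φ φ.injective).1 hzi

lemma span_tower {P P' Ω : Type*} [CommRing P] [CommRing P'] [CommRing Ω] [Algebra P Ω]
    [Algebra P' Ω] (P2 : Subalgebra P Ω) (h : ∀ c : P', algebraMap P' Ω c ∈ P2) (d : Set Ω) {z : Ω}
    (hz : z ∈ Submodule.span P' d) : z ∈ P2.toSubmodule * Submodule.span P d := by
  induction hz using Submodule.span_induction with
  | mem t ht =>
    rw [← one_mul t]
    exact Submodule.mul_mem_mul (one_mem P2) (Submodule.subset_span ht)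
  | zero => exact zero_mem _
  | add s t _ _ hs ht => exact add_mem hs ht
  | smul c t _ ht =>
    rw [Algebra.smul_def]
    have h1 := Submodule.mul_mem_mul (M := P2.toSubmodule) (h c) ht
    rwa [← mul_assoc, Subalgebra.mul_toSubmodule, sup_idem] at h1

lemma mem_of_int {P P' Ω : Type*} [CommRing P] [CommRing P'] [CommRing Ω] [Algebra P Ω]
    [Algebra P' Ω] (j : P →+* P') (hj : (algebraMap P' Ω).comp j = algebraMap P Ω) {z : Ω}
    (hz : IsIntegral P z) : IsIntegral P' z := by
  obtain ⟨f, hf, hf'⟩ := hz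
  refine ⟨f.map j, hf.map _, ?_⟩
  rw [Polynomial.eval₂_map, hj]
  exact hf'

lemma mem_of_adjoin {k Ω : Type*} [Field k] [Field Ω] [Algebra k Ω] (T Y : Set Ω)
    (hT : ∀ t ∈ T, IsIntegral k t) (Q : Subring Ω) (hk : ∀ c : k, algebraMap k Ω c ∈ Q)
    (hTQ : T ⊆ Q) (hYQ : Y ⊆ Q) {c : Ω} (hc : c ∈ Algebra.adjoin (adjoin k T) Y) : c ∈ Q := by
  induction hc using Algebra.adjoin_induction with
  | mem c hc => exact hYQ hc
  | algebraMap c =>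
    obtain ⟨c, hc⟩ := c
    have h1 : c ∈ (adjoin k T).toSubalgebra := hc
    rw [adjoin_toSubalgebra_of_isAlgebraic fun t ht => (hT t ht).isAlgebraic] at h1
    change c ∈ Q
    clear hc
    induction h1 using Algebra.adjoin_induction with
    | mem c hc => exact hTQ hc
    | algebraMap c => exact hk c
    | add _ _ _ _ h1 h2 => exact add_mem h1 h2
    | mul _ _ _ _ h1 h2 => exact mul_mem h1 h2
  | add _ _ _ _ h1 h2 => exact add_mem h1 h2
  | mul _ _ _ _ h1 h2 => exact mul_mem h1 h2

/-- Key finiteness: the integral closure of a polynomial ring in a f.g. algebraic field extension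
is contained in a finitely generated module. -/
theorem finite_aux {k Ω : Type*} [Field k] [Field Ω] [Algebra k Ω] [IsAlgClosed Ω]
    {ι : Type*} [Finite ι] (x : ι → Ω) (hx : AlgebraicIndependent k x)
    (a : Set Ω) (hfin : a.Finite) (ha : ∀ z ∈ a, IsIntegral (Algebra.adjoin k (Set.range x)) z) :
    ∃ D : Submodule (Algebra.adjoin k (Set.range x)) Ω, D.FG ∧
      ∀ z ∈ adjoin k (a ∪ Set.range x), IsIntegral (Algebra.adjoin k (Set.range x)) z → z ∈ D := by
  obtain ⟨p, hpk⟩ := ExpChar.exists k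
  have hp : ExpChar Ω p := expChar_of_injective_algebraMap (algebraMap k Ω).injective p
  let F := adjoin k (Set.range x)
  have hpF : ExpChar F p := expChar_of_injective_algebraMap (algebraMap k F).injective p
  let M := perfectClosure F Ω
  have haF : ∀ z ∈ a, IsIntegral F z := by
    intro z hz
    have h1 := ha z hz
    exact h1.tower_top (A := F)
  let W : Set Ω := ⋃ z ∈ a, (((minpoly M z).map (algebraMap M Ω)).coeffs : Set Ω)
  have hW : W.Finite := hfin.biUnion fun z _ => Finset.finite_toSet _
  obtain ⟨n, hn⟩ := common_pow (F := F) p hW (by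
    intro w hw
    simp only [W, Set.mem_iUnion] at hw
    obtain ⟨z, _, hw⟩ := hw
    simp only [Finset.mem_coe, Polynomial.mem_coeffs_iff] at hw
    obtain ⟨i, _, rfl⟩ := hw
    rw [Polynomial.coeff_map]
    exact ((minpoly M z).coeff i).2)
  let σ : Ω ≃+* Ω := (iterateFrobeniusEquiv Ω p n).symm
  have hσ : ∀ z, σ.symm z = z ^ p ^ n := fun z => rfl
  have hσ' : ∀ z, (σ z) ^ p ^ n = z := fun z => by rw [← hσ]; simp
  obtain ⟨T, hT, hWT⟩ := roots_mem (k := k) x σ hW (by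
    intro w hw
    obtain ⟨c, hc⟩ := hn w hw
    rw [hσ, ← hc]; exact c.2)
  let T' : Set Ω := (fun c => σ (algebraMap k Ω c)) '' T
  have hT' : T'.Finite := hT.image _
  let y : ι → Ω := fun i => σ (x i)
  have hTint : ∀ t ∈ T', IsIntegral k t := by
    rintro _ ⟨c, _, rfl⟩
    refine IsIntegral.of_pow (n := p ^ n) (expChar_pow_pos Ω p n) ?_
    rw [hσ']; exact isIntegral_algebraMap
  let k' := adjoin k T'
  have : Finite T' := hT'
  have : FiniteDimensional k k' := finiteDimensional_adjoin hTint
  have hy : AlgebraicIndependent k y := by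
    refine AlgebraicIndependent.of_ringHom_of_comp_eq (S := k) (B := Ω) (iterateFrobenius k p n)
      (iterateFrobenius Ω p n) ?_ (iterateFrobenius_inj k p n) ?_
    · convert hx using 1
      ext i; exact hσ' _
    · ext c; simp [iterateFrobenius_def]
  have hy' : AlgebraicIndependent k' y := hy.extendScalars k'
  let P' := Algebra.adjoin k' (Set.range y)
  let F' := adjoin k' (Set.range y)
  have : IsIntegrallyClosed P' := IsIntegrallyClosed.of_equiv hy'.aevalEquiv.toRingEquiv
  have : IsNoetherianRing P' := isNoetherianRing_of_ringEquiv _ hy'.aevalEquiv.toRingEquiv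
  have hxF' : ∀ i, x i ∈ F' := fun i => by
    rw [← hσ' (x i)]; exact pow_mem (subset_adjoin _ _ (Set.mem_range_self i)) _
  have hxP' : ∀ i, x i ∈ P' := fun i => by
    rw [← hσ' (x i)]; exact pow_mem (Algebra.subset_adjoin (Set.mem_range_self i)) _
  have hPP' : ∀ z ∈ Algebra.adjoin k (Set.range x), z ∈ P' := by
    intro z hz
    have : Algebra.adjoin k (Set.range x) ≤ P'.restrictScalars k :=
      Algebra.adjoin_le (by rintro _ ⟨i, rfl⟩; exact hxP' i)
    exact this hz
  have hP'F' : ∀ z ∈ P', z ∈ F' := fun z hz => algebra_adjoin_le_adjoin _ _ hz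
  have hWF' : ∀ w ∈ W, w ∈ F' := by
    intro w hw
    have : w ∈ restrictScalars k F' := by
      rw [show restrictScalars k F' = _ from adjoin_adjoin_left k T' (Set.range y)]
      exact hWT hw
    exact this
  have hsep : ∀ z ∈ a, IsSeparable F' z := by
    intro z hz
    have hzM : IsIntegral M z := (haF z hz).tower_top
    refine sep_of_coeff (minpoly M z)
      (PerfectField.separable_of_irreducible (minpoly.irreducible hzM)) z (minpoly.aeval _ _) ?_
    intro i
    have : algebraMap M Ω ((minpoly M z).coeff i) ∈ F' := by
      by_cases h0 : (minpoly M z).coeff i = 0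
      · rw [h0, map_zero]; exact zero_mem _
      · apply hWF'
        simp only [W, Set.mem_iUnion]
        refine ⟨z, hz, ?_⟩
        simp only [Finset.mem_coe, Polynomial.mem_coeffs_iff]
        refine ⟨i, ?_, by rw [Polynomial.coeff_map]⟩
        rw [Polynomial.mem_support_iff, Polynomial.coeff_map]
        simpa using h0
    exact ⟨⟨_, this⟩, rfl⟩
  obtain ⟨D, hD, hD'⟩ := finite_sep P' F' a hfin hsep
  obtain ⟨d, hd⟩ := hD
  have hyint : ∀ t ∈ T' ∪ Set.range y, IsIntegral (Algebra.adjoin k (Set.range x)) t := by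
    rintro t (ht | ⟨i, rfl⟩)
    · exact (hTint t ht).tower_top
    · refine IsIntegral.of_pow (n := p ^ n) (expChar_pow_pos Ω p n) ?_
      rw [hσ']
      exact isIntegral_algebraMap (R := Algebra.adjoin k (Set.range x)) (A := Ω)
        (x := ⟨x i, Algebra.subset_adjoin (Set.mem_range_self i)⟩)
  let P2 : Subalgebra (Algebra.adjoin k (Set.range x)) Ω :=
    Algebra.adjoin (Algebra.adjoin k (Set.range x)) (T' ∪ Set.range y)
  have hP2 : P2.toSubmodule.FG := fg_adjoin_of_finite (hT'.union (Set.finite_range y)) hyint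
  have hP'2 : ∀ c ∈ P', c ∈ P2 := fun c hc =>
    mem_of_adjoin T' (Set.range y) hTint P2.toSubring
      (fun c => P2.algebraMap_mem (algebraMap k (Algebra.adjoin k (Set.range x)) c))
      (fun t ht => Algebra.subset_adjoin (Or.inl ht))
      (fun t ht => Algebra.subset_adjoin (Or.inr ht)) hc
  refine ⟨P2.toSubmodule * Submodule.span _ (d : Set Ω), hP2.mul ⟨d, rfl⟩, fun z hz hzi => ?_⟩
  have : IsScalarTower k F' Ω := IsScalarTower.of_algebraMap_eq' rfl
  have hzL : z ∈ adjoin F' a := by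
    have : adjoin k (a ∪ Set.range x) ≤ (adjoin F' a).restrictScalars k := by
      rw [adjoin_le_iff]
      rintro t (ht | ⟨i, rfl⟩)
      · exact subset_adjoin F' a ht
      · exact (adjoin F' a).algebraMap_mem ⟨x i, hxF' i⟩
    exact this hz
  have hzi' : IsIntegral P' z := by
    exact mem_of_int (Subring.inclusion (S := (Algebra.adjoin k (Set.range x)).toSubring) (T := P'.toSubring) hPP') rfl hzi
  have hzD := hD' z hzL hzi'
  rw [← hd] at hzD
  exact span_tower P2 (fun c => hP'2 _ c.2) d hzD

lemma span_of_span {P A Ω : Type*} [CommRing P] [CommRing A] [CommRing Ω] [Algebra P Ω]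
    [Algebra A Ω] (h : ∀ c : P, algebraMap P Ω c ∈ (algebraMap A Ω).range) (d : Set Ω) {z : Ω}
    (hz : z ∈ Submodule.span P d) : z ∈ Submodule.span A d := by
  induction hz using Submodule.span_induction with
  | mem t ht => exact Submodule.subset_span ht
  | zero => exact zero_mem _
  | add s t _ _ hs ht => exact add_mem hs ht
  | smul c t _ ht =>
    obtain ⟨a, ha⟩ := h c
    rw [Algebra.smul_def, ← ha, ← Algebra.smul_def]
    exact Submodule.smul_mem _ _ ht

/-- Finiteness of integral closure for finitely generated domains over a field. -/
theorem finite_of_birational (k A C : Type*) [Field k] [CommRing A] [IsDomain A] [Algebra k A]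
    [Algebra.FiniteType k A] [CommRing C] [IsDomain C] [Algebra A C] [Algebra.IsIntegral A C]
    (hinj : Function.Injective (algebraMap A C))
    (h : ∀ c : C, ∃ a b : A, b ≠ 0 ∧ algebraMap A C b * c = algebraMap A C a) :
    Module.Finite A C := by
  let Ω := AlgebraicClosure (FractionRing C)
  let : Algebra k C := ((algebraMap A C).comp (algebraMap k A)).toAlgebra
  have : IsScalarTower k A C := IsScalarTower.of_algebraMap_eq' rfl
  have : IsNoetherianRing A := Algebra.FiniteType.isNoetherianRing k A
  have hCΩ : Function.Injective (algebraMap C Ω) := by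
    rw [IsScalarTower.algebraMap_eq C (FractionRing C) Ω]
    exact (algebraMap (FractionRing C) Ω).injective.comp (IsFractionRing.injective C _)
  have hAΩ : Function.Injective (algebraMap A Ω) := by
    rw [IsScalarTower.algebraMap_eq A C Ω]
    exact hCΩ.comp hinj
  obtain ⟨s, g, hg, hgf⟩ := exists_finite_inj_algHom_of_fg k A
  let φ : A →ₐ[k] Ω := IsScalarTower.toAlgHom k A Ω
  let x : Fin s → Ω := fun i => φ (g (MvPolynomial.X i))
  have hxg : MvPolynomial.aeval x = φ.comp g := by
    ext i; simp [x]
  have hx : AlgebraicIndependent k x := by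
    rw [AlgebraicIndependent, hxg]
    exact hAΩ.comp hg
  have hP : ∀ c : MvPolynomial (Fin s) k, φ (g c) ∈ Algebra.adjoin k (Set.range x) := by
    intro c
    rw [Algebra.adjoin_range_eq_range_aeval, hxg]
    exact ⟨c, rfl⟩
  have hP' : ∀ c ∈ Algebra.adjoin k (Set.range x), c ∈ (algebraMap A Ω).range := by
    intro c hc
    rw [Algebra.adjoin_range_eq_range_aeval, hxg] at hc
    obtain ⟨c, rfl⟩ := hc
    exact ⟨g c, rfl⟩
  have hAint : ∀ a : A, IsIntegral (Algebra.adjoin k (Set.range x)) (φ a) := by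
    intro a
    obtain ⟨f, hf, hf'⟩ := hgf.to_isIntegral a
    let j : MvPolynomial (Fin s) k →+* Algebra.adjoin k (Set.range x) :=
      ((φ.comp g).codRestrict _ hP).toRingHom
    refine ⟨f.map j, hf.map _, ?_⟩
    rw [Polynomial.eval₂_map]
    have h3 := congrArg φ hf'
    rw [map_zero] at h3
    rw [← h3]
    change _ = (φ : A →+* Ω) _
    rw [Polynomial.hom_eval₂]
    rfl
  obtain ⟨S, hS⟩ := (inferInstance : Algebra.FiniteType k A).out
  obtain ⟨D, ⟨d, hd⟩, hD⟩ := finite_aux x hx (φ '' (S : Set A)) (S.finite_toSet.image _) (by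
    rintro _ ⟨a, _, rfl⟩; exact hAint a)
  have hAL : ∀ a : A, φ a ∈ adjoin k (φ '' (S : Set A) ∪ Set.range x) := by
    intro a
    have h1 : (⊤ : Subalgebra k A).map φ ≤
        (adjoin k (φ '' (S : Set A) ∪ Set.range x)).toSubalgebra := by
      rw [← hS, AlgHom.map_adjoin]
      exact Algebra.adjoin_le fun z hz => subset_adjoin _ _ (Or.inl hz)
    exact h1 ⟨a, trivial, rfl⟩
  let ψ : C →ₗ[A] Ω := (IsScalarTower.toAlgHom A C Ω).toLinearMap
  have hψ : Function.Injective ψ := hCΩ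
  have hle : LinearMap.range ψ ≤ Submodule.span A (d : Set Ω) := by
    rintro _ ⟨c, rfl⟩
    refine span_of_span (P := Algebra.adjoin k (Set.range x)) (fun c => hP' _ c.2) d ?_
    rw [hd]
    apply hD
    · obtain ⟨a, b, hb, hab⟩ := h c
      have h1 : φ b * algebraMap C Ω c = φ a := by
        have := congrArg (algebraMap C Ω) hab
        rw [map_mul, ← IsScalarTower.algebraMap_apply, ← IsScalarTower.algebraMap_apply] at this
        exact this
      have hb' : φ b ≠ 0 := fun h0 => hb (hAΩ (by rw [map_zero]; exact h0))
      have h2 : ψ c = φ a / φ b := by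
        rw [eq_div_iff hb', ← h1, mul_comm]; rfl
      rw [h2]
      exact div_mem (hAL a) (hAL b)
    · have h1 : IsIntegral A (algebraMap C Ω c) :=
        (Algebra.IsIntegral.isIntegral (R := A) c).map (IsScalarTower.toAlgHom A C Ω)
      let Q : Subalgebra (Algebra.adjoin k (Set.range x)) Ω := integralClosure _ Ω
      have h2 : IsIntegral Q (algebraMap C Ω c) :=
        mem_of_int (φ.toRingHom.codRestrict Q hAint) rfl h1
      exact isIntegral_trans (R := Algebra.adjoin k (Set.range x)) (A := Q) _ h2
  have : IsNoetherian A (Submodule.span A (d : Set Ω)) :=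
    isNoetherian_span_of_finite A d.finite_toSet
  have : IsNoetherian A (LinearMap.range ψ) := isNoetherian_of_le hle
  exact Module.Finite.equiv (LinearEquiv.ofInjective ψ hψ).symm

end Semiaff

namespace Semiaff

lemma genericPoint_mem {X : Scheme} [AlgebraicGeometry.IsIntegral X] (U : X.Opens) [Nonempty U] :
    genericPoint X ∈ U :=
  (((genericPoint_spec X).mem_open_set_iff U.isOpen).mpr (by simpa using ‹Nonempty U›))

lemma isIntegrallyClosed_sections {T : Scheme} [AlgebraicGeometry.IsIntegral T]
    (h : ∀ x : T, IsIntegrallyClosed (T.presheaf.stalk x)) (U : T.Opens) [Nonempty U]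
    (hU : IsAffineOpen U) : IsIntegrallyClosed Γ(T, U) := by
  refine IsIntegrallyClosed.of_localization_maximal fun P _ hP => ?_
  let y : PrimeSpectrum Γ(T, U) := ⟨P, hP.isPrime⟩
  let : Algebra Γ(T, U) (T.presheaf.stalk (hU.fromSpec y)) :=
    TopCat.Presheaf.algebra_section_stalk T.presheaf ⟨hU.fromSpec y, (hU.isoSpec.inv _).2⟩
  have : IsLocalization.AtPrime (T.presheaf.stalk (hU.fromSpec y)) P :=
    hU.isLocalization_stalk' y (hU.isoSpec.inv _).2
  have := h (hU.fromSpec y)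
  exact IsIntegrallyClosed.of_equiv (IsLocalization.algEquiv P.primeCompl
    (T.presheaf.stalk (hU.fromSpec y)) (Localization.AtPrime P)).toRingEquiv

lemma isFinite_normalization {k : Type} [Field k] {S T : Scheme}
    [AlgebraicGeometry.IsIntegral S] [AlgebraicGeometry.IsIntegral T]
    (pS : S ⟶ Spec (CommRingCat.of k)) [LocallyOfFiniteType pS]
    (ν : T ⟶ S) (hν : IsNormalization ν) : IsFinite ν := by
  obtain ⟨-, h1, h2, h3, h4⟩ := hν
  have hIntegral : IsIntegralHom ν := IsIntegralHom.iff_universallyClosed_and_isAffineHom.2 ⟨h2, h1⟩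
  refine { toIsAffineHom := h1, finite_app := fun U hU => ?_ }
  by_cases hne : Nonempty U
  swap
  · have : U = ⊥ := by
      ext x; simp only [not_nonempty_iff] at hne
      exact ⟨fun hx => hne.elim ⟨x, hx⟩, fun hx => hx.elim⟩
    subst this
    have : Subsingleton Γ(T, ν ⁻¹ᵁ ⊥) := by
      change Subsingleton Γ(T, ⊥); infer_instance
    exact RingHom.Finite.of_surjective _ (fun x => ⟨0, Subsingleton.elim _ _⟩)
  have hmem : ν (genericPoint T) ∈ U := by
    rw [h3]; exact genericPoint_mem U
  have hmem' : genericPoint T ∈ ν ⁻¹ᵁ U := hmem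
  have : Nonempty (ν ⁻¹ᵁ U) := ⟨⟨_, hmem'⟩⟩
  have hft : (pS.appLE ⊤ U le_top).hom.FiniteType :=
    HasRingHomProperty.appLE @LocallyOfFiniteType pS inferInstance
      ⟨⊤, isAffineOpen_top _⟩ ⟨U, hU⟩ _
  let φ : k →+* Γ(S, U) := (pS.appLE ⊤ U le_top).hom.comp
    (Scheme.ΓSpecIso (CommRingCat.of k)).inv.hom
  have hφ : φ.FiniteType := hft.comp (RingHom.FiniteType.of_surjective _
    (ConcreteCategory.bijective_of_isIso (Scheme.ΓSpecIso (CommRingCat.of k)).inv).2)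
  let : Algebra k Γ(S, U) := φ.toAlgebra
  have : Algebra.FiniteType k Γ(S, U) := hφ
  let : Algebra Γ(S, U) Γ(T, ν ⁻¹ᵁ U) := (ν.app U).hom.toAlgebra
  have : Algebra.IsIntegral Γ(S, U) Γ(T, ν ⁻¹ᵁ U) :=
    ⟨IsIntegralHom.isIntegral_app ν U hU⟩
  have hgerm (a : Γ(S, U)) : ν.stalkMap (genericPoint T) (S.presheaf.germ U _ hmem a) =
      T.presheaf.germ (ν ⁻¹ᵁ U) _ hmem' (ν.app U a) := by
    exact ν.germ_stalkMap_apply U _ hmem a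
  have hinj : Function.Injective (algebraMap Γ(S, U) Γ(T, ν ⁻¹ᵁ U)) := by
    intro a b hab
    change ν.app U a = ν.app U b at hab
    apply germ_injective_of_isIntegral S _ hmem
    apply (ConcreteCategory.bijective_of_isIso (ν.stalkMap (genericPoint T))).1
    rw [hgerm, hgerm, hab]
  refine finite_of_birational k Γ(S, U) Γ(T, ν ⁻¹ᵁ U) hinj fun c => ?_
  obtain ⟨s, hs⟩ := (ConcreteCategory.bijective_of_isIso (ν.stalkMap (genericPoint T))).2
    (T.presheaf.germ (ν ⁻¹ᵁ U) _ hmem' c)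
  let := S.presheaf.algebra_section_stalk ⟨ν (genericPoint T), hmem⟩
  have := hU.isLocalization_stalk ⟨ν (genericPoint T), hmem⟩
  obtain ⟨⟨a, b⟩, hab⟩ := IsLocalization.surj
    (hU.primeIdealOf ⟨ν (genericPoint T), hmem⟩).asIdeal.primeCompl s
  refine ⟨a, b, fun hb => b.2 (hb ▸ Ideal.zero_mem _), ?_⟩
  apply germ_injective_of_isIntegral T _ hmem'
  have e : ∀ a : Γ(S, U), T.presheaf.germ (ν ⁻¹ᵁ U) _ hmem' (algebraMap Γ(S, U) Γ(T, ν ⁻¹ᵁ U) a) =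
    ν.stalkMap (genericPoint T) (S.presheaf.germ U _ hmem a) := fun a => (hgerm a).symm
  rw [map_mul, e, e, ← hs, ← map_mul]
  congr 1
  rw [mul_comm]; exact hab

end Semiaff

namespace Semiaff
open CategoryTheory.Limits
universe u

lemma bijective_integralClosure {A K B : Type*} [CommRing A] [IsDomain A] [IsIntegrallyClosed A]
    [Field K] [Algebra A K] [IsFractionRing A K] [CommRing B] (φ : A →+* B) (e : K →+* B)
    (he : Function.Bijective e) (h : ∀ a, φ a = e (algebraMap A K a)) :
    letI := φ.toAlgebra
    Function.Bijective (algebraMap A (integralClosure A B)) := by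
  let := φ.toAlgebra
  let e' : K →ₐ[A] B := { e with commutes' := fun a => (h a).symm }
  constructor
  · intro a b hab
    have h2 : φ a = φ b := congrArg Subtype.val hab
    rw [h, h] at h2
    exact IsFractionRing.injective A K (he.1 h2)
  · rintro ⟨x, hx⟩
    obtain ⟨y, rfl⟩ := he.2 x
    have hy : IsIntegral A y := (isIntegral_algHom_iff e' he.1).1 hx
    obtain ⟨a, rfl⟩ := IsIntegrallyClosed.isIntegral_iff.1 hy
    exact ⟨a, Subtype.ext (h a)⟩

lemma isIso_of_affine {X Y : Scheme.{u}} (f : X ⟶ Y) [IsAffineHom f]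
    (h : ∀ U : Y.Opens, IsAffineOpen U → IsIso (f.app U)) : IsIso f := by
  change MorphismProperty.isomorphisms Scheme.{u} f
  have inst : HasAffineProperty (MorphismProperty.isomorphisms Scheme.{u})
      fun X _ f _ ↦ IsAffine X ∧ IsIso (f.appTop) :=
    instHasAffinePropertyIsomorphismsSchemeAndIsAffineIsIsoCommRingCatAppTop
  rw [inst.eq_targetAffineLocally]
  intro U
  refine ⟨U.2.preimage f, ?_⟩
  have := h U.1 U.2
  rw [morphismRestrict_appTop]
  have e : U.1.ι ''ᵁ ⊤ = U.1 := by simp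
  have : IsIso (f.app (U.1.ι ''ᵁ ⊤)) := by rw [e]; infer_instance
  refine IsIso.comp_isIso' this ?_
  have (A B : X.Opens) (h : A = B) : IsIso (X.presheaf.map (eqToHom h).op) := inferInstance
  exact this _ _ _

lemma isIso_fromNormalization {T : Scheme} [AlgebraicGeometry.IsIntegral T]
    (h : ∀ x : T, IsIntegrallyClosed (T.presheaf.stalk x))
    [QuasiCompact (T.fromSpecStalk (genericPoint T))]
    [QuasiSeparated (T.fromSpecStalk (genericPoint T))] :
    IsIso (T.fromSpecStalk (genericPoint T)).fromNormalization := by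
  set f := T.fromSpecStalk (genericPoint T) with hf
  refine isIso_of_affine _ fun U hU => ?_
  by_cases hne : Nonempty U
  swap
  · have : U = ⊥ := by
      ext x; simp only [not_nonempty_iff] at hne
      exact ⟨fun hx => hne.elim ⟨x, hx⟩, fun hx => hx.elim⟩
    subst this
    have : Subsingleton Γ(f.normalization, f.fromNormalization ⁻¹ᵁ ⊥) := by
      change Subsingleton Γ(f.normalization, ⊥); infer_instance
    have : Subsingleton Γ(T, ⊥) := inferInstance
    rw [ConcreteCategory.isIso_iff_bijective]
    exact ⟨fun _ _ _ => Subsingleton.elim _ _, fun x => ⟨0, Subsingleton.elim _ _⟩⟩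
  rw [Scheme.Hom.fromNormalization_app f hU]
  have hmem := genericPoint_mem U
  have htop : f ⁻¹ᵁ U = ⊤ := by
    rw [eq_top_iff]
    intro x _
    have : f x ∈ Set.range f := ⟨x, rfl⟩
    rw [hf, Scheme.range_fromSpecStalk] at this
    exact this.mem_open U.2 hmem
  have := functionField_isFractionRing_of_isAffineOpen T U hU
  have := isIntegrallyClosed_sections h U hU
  let e : CommRingCat.of (T.functionField) ⟶ Γ(Spec (T.presheaf.stalk (genericPoint T)), f ⁻¹ᵁ U) :=
    (Scheme.ΓSpecIso _).inv ≫ (Spec _).presheaf.map (homOfLE le_top).op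
  have he : IsIso e := by
    have : IsIso (homOfLE (le_top : f ⁻¹ᵁ U ≤ ⊤)) := ⟨homOfLE htop.ge, rfl, rfl⟩
    infer_instance
  have hb := bijective_integralClosure (K := T.functionField) (f.app U).hom e.hom
    (ConcreteCategory.bijective_of_isIso e) (fun a => by
      have := Scheme.fromSpecStalk_app (X := T) hmem
      have := congrArg (fun g => g.hom a) this
      exact this)
  let := (f.app U).hom.toAlgebra
  have : IsIso (CommRingCat.ofHom (algebraMap Γ(T, U)
     (integralClosure Γ(T, U) Γ(Spec (T.presheaf.stalk (genericPoint T)), f ⁻¹ᵁ U)))) := by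
    rw [ConcreteCategory.isIso_iff_bijective]
    exact hb
  infer_instance

lemma exists_lift {S T T' : Scheme}
    [AlgebraicGeometry.IsIntegral S] [AlgebraicGeometry.IsIntegral T]
    [AlgebraicGeometry.IsIntegral T'] (ν : T ⟶ S) (hν : IsNormalization ν) (g : T' ⟶ S)
    (hT' : ∀ x : T', IsIntegrallyClosed (T'.presheaf.stalk x))
    (hg : g (genericPoint T') = genericPoint S) :
    ∃ h : T' ⟶ T, h ≫ ν = g ∧ h (genericPoint T') = genericPoint T := by
  obtain ⟨-, h1, h2, h3, h4⟩ := hν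
  have hIntegral : IsIntegralHom ν := IsIntegralHom.iff_universallyClosed_and_isAffineHom.2 ⟨h2, h1⟩
  have hpt : ν (genericPoint T) = g (genericPoint T') := h3.trans hg.symm
  let f := T'.fromSpecStalk (genericPoint T')
  let u : Spec (T'.presheaf.stalk (genericPoint T')) ⟶ T :=
    Spec.map (g.stalkMap _) ≫ Spec.map (S.presheaf.stalkSpecializes (specializes_of_eq hpt.symm)) ≫
      Spec.map (inv (ν.stalkMap (genericPoint T))) ≫ T.fromSpecStalk (genericPoint T)
  have hu : u ≫ ν = f ≫ g := by
    simp only [u, f, Category.assoc]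
    rw [← Scheme.SpecMap_stalkMap_fromSpecStalk, ← Scheme.SpecMap_stalkMap_fromSpecStalk,
      ← Scheme.SpecMap_stalkSpecializes_fromSpecStalk (specializes_of_eq hpt.symm)]
    rw [← Spec.map_comp_assoc (ν.stalkMap _)]
    simp
  have : IsNoetherianRing (T'.presheaf.stalk (genericPoint T')) :=
    inferInstanceAs (IsNoetherianRing T'.functionField)
  have : QuasiCompact f := inferInstance
  have : QuasiSeparated f := by
    have : QuasiSeparated (f ≫ terminal.from _) := by
      rw [terminal.hom_ext (f ≫ terminal.from _) (terminal.from _)]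
      exact (quasiSeparatedSpace_iff_quasiSeparated _).1 inferInstance
    exact QuasiSeparated.of_comp f (terminal.from _)
  have hH : f = pullback.lift u f hu ≫ pullback.snd ν g := (pullback.lift_snd _ _ _).symm
  have hiso : IsIso f.fromNormalization := isIso_fromNormalization hT'
  let d := f.normalizationDesc _ _ hH
  have hd : d ≫ pullback.snd ν g = f.fromNormalization := Scheme.Hom.normalizationDesc_comp ..
  refine ⟨inv f.fromNormalization ≫ d ≫ pullback.fst ν g, ?_, ?_⟩
  · rw [Category.assoc, Category.assoc, pullback.condition, reassoc_of% hd]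
    simp
  · have e : f ≫ inv f.fromNormalization ≫ d ≫ pullback.fst ν g = u := by
      have : f ≫ inv f.fromNormalization = f.toNormalization := by
        rw [IsIso.comp_inv_eq]; simp
      rw [reassoc_of% this]
      simp only [d, Scheme.Hom.toNormalization_normalizationDesc_assoc]
      exact pullback.lift_fst _ _ _
    obtain ⟨z, e2⟩ : ∃ z : Spec (T'.presheaf.stalk (genericPoint T')), f z = genericPoint T' :=
      ⟨IsLocalRing.closedPoint _, Scheme.fromSpecStalk_closedPoint⟩
    clear_value d
    generalize inv f.fromNormalization ≫ d ≫ pullback.fst ν g = h' at e ⊢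
    rw [← e2, ← Scheme.Hom.comp_apply, e]
    have hz : u z ∈ Set.range (T.fromSpecStalk (genericPoint T)) := by
      simp only [u, Scheme.Hom.comp_apply]
      exact ⟨_, rfl⟩
    rw [Scheme.range_fromSpecStalk] at hz
    exact (hz.antisymm (genericPoint_specializes _)).eq
end Semiaff

namespace Semiaff
open CategoryTheory.Limits

lemma isIntegral_app_of_universallyClosed {X Y : Scheme} (h : X ⟶ Y) [UniversallyClosed h]
    (U : Y.Opens) (hU : IsAffineOpen U) : (h.app U).hom.IsIntegral := by
  have : IsAffine U.toScheme := hU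
  have H := isIntegral_appTop_of_universallyClosed (h ∣_ U)
  rw [morphismRestrict_appTop] at H
  have e : U.ι ''ᵁ ⊤ = U := by simp
  have key : ∀ (V : Y.Opens) (W : X.Opens) (i : W ⟶ h ⁻¹ᵁ V) (_ : IsIso i),
      V = U → (h.app V ≫ X.presheaf.map i.op).hom.IsIntegral → (h.app U).hom.IsIntegral := by
    rintro V W i hi rfl H
    have H2 := RingHom.IsIntegral.trans _ (X.presheaf.map (inv i).op).hom H
      (RingHom.isIntegral_of_surjective _ (ConcreteCategory.bijective_of_isIso _).2)
    rwa [← CommRingCat.hom_comp, Category.assoc, ← Functor.map_comp, ← op_comp, IsIso.inv_hom_id,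
      op_id, CategoryTheory.Functor.map_id, Category.comp_id] at H2
  exact key _ _ _ inferInstance e H

lemma exists_global_section {T : Scheme} [AlgebraicGeometry.IsIntegral T] (s : T.functionField)
    (h : ∀ U : T.Opens, IsAffineOpen U → ∀ hU : genericPoint T ∈ U,
      ∃ a : Γ(T, U), T.presheaf.germ U _ hU a = s) :
    ∃ a : Γ(T, ⊤), T.presheaf.germ ⊤ (genericPoint T) trivial a = s := by
  let ι := {U : T.Opens // IsAffineOpen U ∧ genericPoint T ∈ U}
  choose a ha using fun i : ι => h i.1 i.2.1 i.2.2
  have hcov : (⊤ : T.Opens) ≤ iSup (fun i : ι => i.1) := by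
    intro x _
    obtain ⟨U, hU, hx, -⟩ := exists_isAffineOpen_mem_and_subset (x := x) (U := ⊤) trivial
    have : Nonempty U := ⟨⟨x, hx⟩⟩
    exact TopologicalSpace.Opens.mem_iSup.2 ⟨⟨U, hU, genericPoint_mem U⟩, hx⟩
  obtain ⟨b, hb, -⟩ := T.sheaf.existsUnique_gluing' (fun i : ι => i.1) ⊤
    (fun i => homOfLE le_top) hcov a (by
      intro i j
      apply germ_injective_of_isIntegral T (genericPoint T) (U := i.1 ⊓ j.1) ⟨i.2.2, j.2.2⟩
      erw [T.presheaf.germ_res_apply, T.presheaf.germ_res_apply]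
      rw [ha, ha])
  refine ⟨b, ?_⟩
  obtain ⟨i⟩ : Nonempty ι := by
    obtain ⟨i, -⟩ := TopologicalSpace.Opens.mem_iSup.1 (hcov (x := genericPoint T) trivial)
    exact ⟨i⟩
  have := hb i
  rw [← ha i, ← this]
  exact (T.presheaf.germ_res_apply (homOfLE (le_top : i.1 ≤ ⊤)) _ i.2.2 b).symm

lemma isIntegral_appTop_of_normal {T T' : Scheme} [AlgebraicGeometry.IsIntegral T]
    [AlgebraicGeometry.IsIntegral T'] (hT : ∀ x : T, IsIntegrallyClosed (T.presheaf.stalk x))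
    (h : T' ⟶ T) [UniversallyClosed h] (hh : h (genericPoint T') = genericPoint T) :
    h.appTop.hom.IsIntegral := by
  intro b
  let ψ : T.functionField ⟶ T'.functionField :=
    T.presheaf.stalkSpecializes (specializes_of_eq hh) ≫ h.stalkMap (genericPoint T')
  have hψ (U : T.Opens) (hU : genericPoint T ∈ U) (hU' : genericPoint T' ∈ h ⁻¹ᵁ U) (a : Γ(T, U)) :
      ψ (T.presheaf.germ U _ hU a) = T'.presheaf.germ (h ⁻¹ᵁ U) _ hU' (h.app U a) := by
    have e : T.presheaf.germ U _ hU ≫ ψ = h.app U ≫ T'.presheaf.germ (h ⁻¹ᵁ U) _ hU' := by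
      simp only [ψ]
      rw [TopCat.Presheaf.germ_stalkSpecializes_assoc]
      exact h.germ_stalkMap U _ hU'
    exact congrArg (fun g => g.hom a) e
  let s : T'.functionField := T'.presheaf.germ ⊤ (genericPoint T') trivial b
  let := ψ.hom.toAlgebra
  have hs (U : T.Opens) (hUa : IsAffineOpen U) (hU : genericPoint T ∈ U) :
      (T.presheaf.germ U _ hU ≫ ψ).hom.IsIntegralElem s := by
    have hU' : genericPoint T' ∈ h ⁻¹ᵁ U := by change h _ ∈ U; rwa [hh]
    obtain ⟨p, hp, hp0⟩ := isIntegral_app_of_universallyClosed h U hUa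
        (T'.presheaf.map (homOfLE (le_top : h ⁻¹ᵁ U ≤ ⊤)).op b)
    have h3 : T'.presheaf.germ (h ⁻¹ᵁ U) _ hU'
        (T'.presheaf.map (homOfLE (le_top : h ⁻¹ᵁ U ≤ ⊤)).op b) = s :=
        T'.presheaf.germ_res_apply (homOfLE (le_top : h ⁻¹ᵁ U ≤ ⊤)) _ hU' b
    refine ⟨p, hp, ?_⟩
    have h4 : (T.presheaf.germ U _ hU ≫ ψ).hom =
        (T'.presheaf.germ (h ⁻¹ᵁ U) _ hU').hom.comp (h.app U).hom := by
      ext a; exact (hψ U hU hU' a)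
    rw [h4, ← h3]
    erw [← Polynomial.hom_eval₂ _ _ (T'.presheaf.germ (h ⁻¹ᵁ U) _ hU').hom]
    rw [hp0, map_zero]
  have key (U : T.Opens) (hUa : IsAffineOpen U) (hU : genericPoint T ∈ U) (n : ℕ) :
      ∃ a : Γ(T, U), T.presheaf.germ U _ hU a = (minpoly T.functionField s).coeff n := by
    have hU' : genericPoint T' ∈ h ⁻¹ᵁ U := by change h _ ∈ U; rwa [hh]
    have : Nonempty U := ⟨⟨_, hU⟩⟩
    have := functionField_isFractionRing_of_isAffineOpen T U hUa
    have := isIntegrallyClosed_sections hT U hUa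
    let : Algebra Γ(T, U) T'.functionField := (T.presheaf.germ U _ hU ≫ ψ).hom.toAlgebra
    have : IsScalarTower Γ(T, U) T.functionField T'.functionField :=
      IsScalarTower.of_algebraMap_eq' rfl
    have hs : _root_.IsIntegral Γ(T, U) s := hs U hUa hU
    rw [minpoly.isIntegrallyClosed_eq_field_fractions' T.functionField hs, Polynomial.coeff_map]
    exact ⟨_, rfl⟩
  have hIntegral : _root_.IsIntegral T.functionField s := by
    obtain ⟨U, hUa, hU, -⟩ := exists_isAffineOpen_mem_and_subset (X := T) (x := genericPoint T)
      (U := ⊤) trivial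
    obtain ⟨p, hp, hp0⟩ := hs U hUa hU
    refine ⟨p.map (T.presheaf.germ U _ hU).hom, hp.map _, ?_⟩
    rw [Polynomial.eval₂_map]
    exact hp0
  have hl : minpoly T.functionField s ∈
      Polynomial.lifts (T.presheaf.germ ⊤ (genericPoint T) trivial).hom := by
    rw [Polynomial.lifts_iff_coeff_lifts]
    intro n
    exact exists_global_section _ (fun U hU hU' => key U hU hU' n)
  obtain ⟨Q, hQ, -, hQm⟩ := Polynomial.lifts_and_natDegree_eq_and_monic hl (minpoly.monic hIntegral)
  refine ⟨Q, hQm, ?_⟩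
  apply germ_injective_of_isIntegral T' (genericPoint T') (U := ⊤) trivial
  rw [map_zero]
  have h0 := minpoly.aeval T.functionField s
  rw [← hQ, Polynomial.aeval_def, Polynomial.eval₂_map] at h0
  erw [Polynomial.hom_eval₂]
  rw [← h0]
  have : (algebraMap T.functionField T'.functionField).comp
      (T.presheaf.germ ⊤ (genericPoint T) trivial).hom =
      (T'.presheaf.germ ⊤ (genericPoint T') trivial).hom.comp h.appTop.hom := by
    ext a; exact hψ ⊤ trivial trivial a
  rw [this]
end Semiaff

namespace Semiaff
open CategoryTheory.Limits

lemma exists_fg_subalgebra {k G G' R : Type*} [Field k] [CommRing G] [CommRing G'] [CommRing R]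
    [Algebra k G] [Algebra k R] [Algebra.FiniteType k R] (η : G →+* G') (hη : η.IsIntegral)
    (φ : R →+* G') (hφ : φ.IsIntegral)
    (hc : ∀ c : k, φ (algebraMap k R c) = η (algebraMap k G c)) :
    ∃ B : Subalgebra k G, B.FG ∧ (η.comp B.val.toRingHom).IsIntegral := by
  classical
  obtain ⟨s, hs⟩ := (inferInstance : Algebra.FiniteType k R).out
  choose p hp hp0 using fun r : R => hη (φ r)
  let B : Subalgebra k G := Algebra.adjoin k ↑(s.biUnion fun r => (p r).coeffs)
  refine ⟨B, ⟨_, rfl⟩, ?_⟩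
  let := (η.comp B.val.toRingHom).toAlgebra
  have h1 : ∀ r ∈ s, IsIntegral B (φ r) := by
    intro r hr
    have hl : p r ∈ Polynomial.lifts B.val.toRingHom := by
      rw [Polynomial.lifts_iff_coeff_lifts]
      intro n
      by_cases h0 : (p r).coeff n = 0
      · exact ⟨0, by rw [h0, map_zero]⟩
      · refine ⟨⟨(p r).coeff n, Algebra.subset_adjoin ?_⟩, rfl⟩
        simp only [Finset.coe_biUnion, Set.mem_iUnion]
        exact ⟨r, hr, Polynomial.coeff_mem_coeffs h0⟩
    obtain ⟨Q, hQ, -, hQm⟩ := Polynomial.lifts_and_natDegree_eq_and_monic hl (hp r)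
    refine ⟨Q, hQm, ?_⟩
    rw [← hp0 r, ← hQ, Polynomial.eval₂_map]
    rfl
  have h2 : ∀ r : R, IsIntegral B (φ r) := by
    intro r
    have hr : r ∈ Algebra.adjoin k (s : Set R) := hs ▸ Algebra.mem_top
    induction hr using Algebra.adjoin_induction with
    | mem x hx => exact h1 x hx
    | algebraMap c =>
      rw [hc]
      exact isIntegral_algebraMap (R := B) (A := G') (x := algebraMap k B c)
    | add x y _ _ hx hy => rw [map_add]; exact hx.add hy
    | mul x y _ _ hx hy => rw [map_mul]; exact hx.mul hy
  intro x
  change IsIntegral B x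
  have h3 : IsIntegral (integralClosure B G') x := by
    obtain ⟨q, hq, hq0⟩ := hφ x
    refine ⟨q.map (φ.codRestrict (integralClosure B G').toSubring h2), hq.map _, ?_⟩
    rw [Polynomial.eval₂_map]
    exact hq0
  exact isIntegral_trans x h3

lemma isSeparated_of_surjective {X Y Z : Scheme} (h : X ⟶ Y) (g : Y ⟶ Z) [UniversallyClosed h]
    [AlgebraicGeometry.Surjective h] [IsSeparated (h ≫ g)] : IsSeparated g := by
  constructor
  refine IsClosedImmersion.of_isPreimmersion _ ?_
  let m : pullback (h ≫ g) (h ≫ g) ⟶ pullback g g :=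
    pullback.map (h ≫ g) (h ≫ g) g g h h (𝟙 _) (by simp) (by simp)
  have hm : UniversallyClosed m :=
    MorphismProperty.pullbackMap (P := @UniversallyClosed) (f := h ≫ g) (g := h ≫ g)
      (f' := g) (g' := g) (i₁ := h) (i₂ := h) inferInstance inferInstance rfl rfl
  have e : pullback.diagonal (h ≫ g) ≫ m = h ≫ pullback.diagonal g := by
    apply pullback.hom_ext
    · rw [Category.assoc, pullback.lift_fst, Category.assoc, pullback.diagonal_fst,
        pullback.diagonal_fst_assoc, Category.comp_id]
    · rw [Category.assoc, pullback.lift_snd, Category.assoc, pullback.diagonal_snd,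
        pullback.diagonal_snd_assoc, Category.comp_id]
  have : Set.range (pullback.diagonal g) = m '' Set.range (pullback.diagonal (h ≫ g)) := by
    ext y
    constructor
    · rintro ⟨x, rfl⟩
      obtain ⟨z, rfl⟩ := h.surjective x
      refine ⟨_, ⟨z, rfl⟩, ?_⟩
      rw [← Scheme.Hom.comp_apply, e, Scheme.Hom.comp_apply]
    · rintro ⟨_, ⟨z, rfl⟩, rfl⟩
      refine ⟨h z, ?_⟩
      rw [← Scheme.Hom.comp_apply, ← e, Scheme.Hom.comp_apply]
  rw [this]
  exact m.isClosedMap _ (pullback.diagonal (h ≫ g)).isClosedEmbedding.isClosed_range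

end Semiaff

namespace Semiaff
open CategoryTheory.Limits

lemma descend {k : Type} [Field k] {T T' : Scheme} [AlgebraicGeometry.IsIntegral T]
    [AlgebraicGeometry.IsIntegral T'] (hT : ∀ x : T, IsIntegrallyClosed (T.presheaf.stalk x))
    (pT : T ⟶ Spec (CommRingCat.of k)) [LocallyOfFiniteType pT]
    (h : T' ⟶ T) [IsProper h] [AlgebraicGeometry.Surjective h]
    (hh : h (genericPoint T') = genericPoint T)
    (A : Scheme) [IsAffine A] (q : A ⟶ Spec (CommRingCat.of k)) [LocallyOfFiniteType q]
    (f : T' ⟶ A) [IsProper f] (hf : f ≫ q = h ≫ pT) :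
    ∃ (A : Scheme) (q : A ⟶ Spec (CommRingCat.of k)) (f : T ⟶ A),
        IsAffine A ∧ LocallyOfFiniteType q ∧ QuasiCompact q ∧ IsProper f ∧ f ≫ q = pT := by
  let c := (Scheme.ΓSpecIso (CommRingCat.of k)).inv
  let : Algebra k Γ(T, ⊤) := (c ≫ pT.appTop).hom.toAlgebra
  let : Algebra k Γ(A, ⊤) := (c ≫ q.appTop).hom.toAlgebra
  have hq : (c ≫ q.appTop).hom.FiniteType := by
    have hft : q.appTop.hom.FiniteType :=
      (HasRingHomProperty.iff_of_isAffine (P := @LocallyOfFiniteType)).1 inferInstance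
    exact hft.comp (RingHom.FiniteType.of_surjective _ (ConcreteCategory.bijective_of_isIso c).2)
  have : Algebra.FiniteType k Γ(A, ⊤) := hq
  have hc : (c ≫ q.appTop) ≫ f.appTop = (c ≫ pT.appTop) ≫ h.appTop := by
    rw [Category.assoc, Category.assoc, ← Scheme.Hom.comp_appTop, ← Scheme.Hom.comp_appTop, hf]
  obtain ⟨B, hB, hBint⟩ := exists_fg_subalgebra h.appTop.hom (isIntegral_appTop_of_normal hT h hh)
    f.appTop.hom (isIntegral_appTop_of_universallyClosed f)
    (fun x : k => congrArg (fun g => g.hom x) hc)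
  have : Algebra.FiniteType k B := (Subalgebra.fg_iff_finiteType B).1 hB
  let i : CommRingCat.of B ⟶ Γ(T, ⊤) := CommRingCat.ofHom B.val.toRingHom
  let j : CommRingCat.of k ⟶ CommRingCat.of B := CommRingCat.ofHom (algebraMap k B)
  let g : T ⟶ Spec (CommRingCat.of B) := T.toSpecΓ ≫ Spec.map i
  have hg : g ≫ Spec.map j = pT := by
    have e1 : j ≫ i = c ≫ pT.appTop := rfl
    simp only [g, Category.assoc]
    rw [← Spec.map_comp, e1, Spec.map_comp, ← Scheme.toSpecΓ_naturality_assoc]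
    simp [c]
  have hj : LocallyOfFiniteType (Spec.map j) := by
    rw [HasRingHomProperty.Spec_iff (P := @LocallyOfFiniteType)]
    exact ‹Algebra.FiniteType k B›
  have hhg : h ≫ g = T'.toSpecΓ ≫ Spec.map (i ≫ h.appTop) := by
    simp only [g]
    rw [Scheme.toSpecΓ_naturality_assoc, Spec.map_comp]
  have hIntegral : IsIntegralHom (Spec.map (i ≫ h.appTop)) := by
    rw [IsIntegralHom.SpecMap_iff]; exact hBint
  have hfe : T'.toSpecΓ ≫ Spec.map f.appTop = f ≫ A.toSpecΓ :=
    (Scheme.toSpecΓ_naturality f).symm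
  have huc : UniversallyClosed (T'.toSpecΓ ≫ Spec.map f.appTop) := by
    rw [hfe]; infer_instance
  have hsep : IsSeparated (T'.toSpecΓ ≫ Spec.map f.appTop) := by
    rw [hfe]; infer_instance
  have huc' : UniversallyClosed T'.toSpecΓ := .of_comp_of_isSeparated _ (Spec.map f.appTop)
  have hsep' : IsSeparated T'.toSpecΓ := .of_comp _ (Spec.map f.appTop)
  have h1 : UniversallyClosed (h ≫ g) := by rw [hhg]; infer_instance
  have h2 : IsSeparated (h ≫ g) := by rw [hhg]; infer_instance
  have h3 : UniversallyClosed g := .of_comp_surjective h g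
  have h4 : IsSeparated g := isSeparated_of_surjective h g
  have h5 : LocallyOfFiniteType g := by
    have : LocallyOfFiniteType (g ≫ Spec.map j) := by rw [hg]; infer_instance
    exact locallyOfFiniteType_of_comp g (Spec.map j)
  exact ⟨_, Spec.map j, g, inferInstance, hj, inferInstance, { }, hg⟩

end Semiaff

/-- Let `k` be a field, `S` and `S'` irreducible and reduced
(i.e. integral) schemes of finite type over `k`, and `π : S' → S` a proper surjective
`k`-morphism.  Then the normalization of `S'` admits a proper `k`-morphism to an
affine `k`-scheme of finite type if and only if the normalization of `S` does.
(In particular, taking `S`, `S'` already normal, a proper surjection between normal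
integral finite-type `k`-schemes descends the property of being proper over an affine
algebraic `k`-scheme.) -/
theorem semiaffine_descends_along_proper_surjection
    (k : Type) [Field k]
    (S S' : Scheme)
    [AlgebraicGeometry.IsIntegral S] [AlgebraicGeometry.IsIntegral S']
    (pS : S ⟶ Spec (CommRingCat.of k)) (pS' : S' ⟶ Spec (CommRingCat.of k))
    [LocallyOfFiniteType pS] [QuasiCompact pS]
    [LocallyOfFiniteType pS'] [QuasiCompact pS']
    (π : S' ⟶ S) [IsProper π] [AlgebraicGeometry.Surjective π]
    (hπ : π ≫ pS = pS')
    (T T' : Scheme)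
    [AlgebraicGeometry.IsIntegral T] [AlgebraicGeometry.IsIntegral T']
    (ν : T ⟶ S) (ν' : T' ⟶ S')
    (hν : IsNormalization ν) (hν' : IsNormalization ν') :
    (∃ (A : Scheme) (q : A ⟶ Spec (CommRingCat.of k)) (f : T' ⟶ A),
        IsAffine A ∧ LocallyOfFiniteType q ∧ QuasiCompact q ∧
        IsProper f ∧ f ≫ q = ν' ≫ pS') ↔
    (∃ (A : Scheme) (q : A ⟶ Spec (CommRingCat.of k)) (f : T ⟶ A),
        IsAffine A ∧ LocallyOfFiniteType q ∧ QuasiCompact q ∧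
        IsProper f ∧ f ≫ q = ν ≫ pS) := by
  obtain ⟨hνn, hνa, hνu, hνg, hνs⟩ := id hν
  obtain ⟨hν'n, hν'a, hν'u, hν'g, hν's⟩ := id hν'
  have hfin : IsFinite ν := Semiaff.isFinite_normalization pS ν hν
  have hfin' : IsFinite ν' := Semiaff.isFinite_normalization pS' ν' hν'
  have hπg : π (genericPoint S') = genericPoint S := by
    obtain ⟨x, hx⟩ := π.surjective (genericPoint S)
    have h1 : π (genericPoint S') ⤳ genericPoint S := by
      rw [← hx]; exact (genericPoint_specializes x).map π.continuous
    exact (h1.antisymm (genericPoint_specializes _)).eq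
  have hg : (ν' ≫ π) (genericPoint T') = genericPoint S := by
    rw [Scheme.Hom.comp_apply]
    exact (congrArg π hν'g).trans hπg
  obtain ⟨h, hh, hη⟩ := Semiaff.exists_lift ν hν (ν' ≫ π) hν'n hg
  have hprop : IsProper (h ≫ ν) := by rw [hh]; infer_instance
  have hp : IsProper h := IsProper.of_comp h ν
  have hsurj : AlgebraicGeometry.Surjective h := by
    refine ⟨Set.range_eq_univ.1 (Set.eq_univ_of_forall fun y => ?_)⟩
    have hcl : IsClosed (Set.range h) := h.isClosedMap.isClosed_range
    exact (genericPoint_specializes y).mem_closed hcl ⟨_, hη⟩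
  have hpp : ν' ≫ pS' = h ≫ ν ≫ pS := by
    rw [← hπ, ← Category.assoc, ← hh, Category.assoc]
  constructor
  · rintro ⟨A, q, f, hA, hq, -, hf, hfq⟩
    exact Semiaff.descend hνn (ν ≫ pS) h hη A q f (hfq.trans hpp)
  · rintro ⟨A, q, f, hA, hq, hqc, hf, hfq⟩
    exact ⟨A, q, h ≫ f, hA, hq, hqc, inferInstance, by rw [Category.assoc, hfq, hpp]⟩

end
end
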